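/- arXiv:1708.05225 — 2 statements merged into one kernel-verified Lean document; each statement's English description precedes it below -/
import Mathlib

section
/- Suppose n ≥ 3. Let φ be the restriction to B of a Möbius transformation of ℝ̂ⁿ with φ(B) ⊆ B. Then for each fixed η ∈ S, the function x ↦ P(φ(x), η)·|Dφ(x)|^{(n−2)/2} is harmonic on B, where P(x,ζ) := (1−|x|²)/|x−ζ|ⁿ is the Poisson kernel. -/
/-!
Let `J` be the inversion in the unit sphere centred at `η` and put `R = J ∘ g`, where `g` is the
Möbius transformation extending `φ`. Since `φ` maps `B` into `B` and `η ∉ B`, the map `R` is finite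
on `B`, differs from `η` there, and `φ = J ∘ R` on `B`. With `|η| = 1`, the formulas for `1 - |J y|²`
and for the conformal factor of `J` make all powers of `|R x - η|` cancel, so that
`P(φ x, η) |Dφ x|^{(n-2)/2} = -(1 + 2⟪η, R x - η⟫) |DR x|^{(n-2)/2}` (`poisson_mul_normDeriv`).

Every Möbius transformation is either a similarity `x ↦ b + c A x` or of the form
`x ↦ b + c A (x - a) / |x - a|²`, with `A` a linear isometry (`IsMobiusHat.normalForm`, by
induction on the number of reflections through `sim_reflection`). Its conformal factor is `c` or
`c / |x - a|²` respectively. In the first case the right-hand side above is affine in `x`; in the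
second it is a linear combination of `|x - a|^{2-n}` and `⟪v, x - a⟫ |x - a|^{-n}`, with the pole `a`
outside `B`. All of these are harmonic by an explicit computation of the Laplacian
(`lap_powForm`, `harmOn_powForm`).
-/

open MeasureTheory Metric Set Filter
open scoped ENNReal NNReal Topology InnerProductSpace Classical

noncomputable section

/-- Euclidean space `ℝⁿ`. -/
abbrev Eucl (n : ℕ) := EuclideanSpace ℝ (Fin n)

/-- The open unit ball `B` in `ℝⁿ`. -/
def uBall (n : ℕ) : Set (Eucl n) := Metric.ball 0 1

/-- The unit sphere `S = ∂B` in `ℝⁿ`. -/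
def uSphere (n : ℕ) : Set (Eucl n) := Metric.sphere 0 1

/-- The normalized surface area measure `σ` on the unit sphere (as a measure on `ℝⁿ`
supported on `S`), normalized so that `σ(S) = 1`. -/
def sphMeasure (n : ℕ) : Measure (Eucl n) :=
  ((Measure.hausdorffMeasure ((n : ℝ) - 1) (uSphere n))⁻¹ : ℝ≥0∞) •
    (Measure.hausdorffMeasure ((n : ℝ) - 1) : Measure (Eucl n)).restrict (uSphere n)

/-- `i`-th standard basis vector of `ℝⁿ`. -/
def basisV (n : ℕ) (i : Fin n) : Eucl n := EuclideanSpace.single i 1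

/-- The Laplacian `Δf(x) = ∑ᵢ ∂²f/∂xᵢ²(x)`. -/
def lap {n : ℕ} {F : Type*} [NormedAddCommGroup F] [NormedSpace ℝ F]
    (f : Eucl n → F) (x : Eucl n) : F :=
  ∑ i : Fin n, iteratedFDeriv ℝ 2 f x ![basisV n i, basisV n i]

/-- `f` is harmonic on `s`: twice continuously differentiable with vanishing Laplacian. -/
def HarmOn {n : ℕ} {F : Type*} [NormedAddCommGroup F] [NormedSpace ℝ F]
    (f : Eucl n → F) (s : Set (Eucl n)) : Prop :=
  ContDiffOn ℝ 2 f s ∧ ∀ x ∈ s, lap f x = 0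

/-- The Jacobian matrix `Dφ(x) = (∂φ⁽ⁱ⁾/∂xⱼ)` of a map `φ : ℝⁿ → ℝⁿ`. -/
def jacMatrix {n : ℕ} (φ : Eucl n → Eucl n) (x : Eucl n) : Matrix (Fin n) (Fin n) ℝ :=
  Matrix.of fun i j => fderiv ℝ φ x (basisV n j) i

/-- `|Dφ(x)| := |J_φ(x)|^{1/n}`, where `J_φ` is the Jacobian determinant. -/
def normDeriv {n : ℕ} (φ : Eucl n → Eucl n) (x : Eucl n) : ℝ :=
  |(jacMatrix φ x).det| ^ ((n : ℝ)⁻¹)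

/-- The weighted composition operator `W_{φ,ψ} f = ψ · (f ∘ φ)`. -/
def wco {n : ℕ} (φ : Eucl n → Eucl n) (ψ : Eucl n → ℂ) (f : Eucl n → ℂ) : Eucl n → ℂ :=
  fun x => ψ x * f (φ x)

/-- The set of values `(∫_S |f(rζ)|^p dσ(ζ))^{1/p}`, `0 ≤ r < 1`. -/
def hpNormSet (n : ℕ) (p : ℝ) (f : Eucl n → ℂ) : Set ℝ :=
  (fun r : ℝ => (∫ ζ, ‖f (r • ζ)‖ ^ p ∂(sphMeasure n)) ^ (1 / p)) '' Set.Ico (0 : ℝ) 1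

/-- The set of values `|f(x)|`, `x ∈ B`. -/
def hInfSet (n : ℕ) (f : Eucl n → ℂ) : Set ℝ := (fun x => ‖f x‖) '' uBall n

/-- Membership in the harmonic Hardy space `h^p(B)`, `1 ≤ p ≤ ∞`. -/
def MemHp (n : ℕ) (p : ℝ≥0∞) (f : Eucl n → ℂ) : Prop :=
  HarmOn f (uBall n) ∧
    if p = ⊤ then BddAbove (hInfSet n f) else BddAbove (hpNormSet n p.toReal f)

/-- The `h^p(B)` norm, `1 ≤ p ≤ ∞`. -/
def hpNorm (n : ℕ) (p : ℝ≥0∞) (f : Eucl n → ℂ) : ℝ :=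
  if p = ⊤ then sSup (hInfSet n f) else sSup (hpNormSet n p.toReal f)

/-- The operator norm of a map `T` on `h^p(B)`. -/
def opNormHp (n : ℕ) (p : ℝ≥0∞) (T : (Eucl n → ℂ) → (Eucl n → ℂ)) : ℝ :=
  sInf {C : ℝ | 0 ≤ C ∧ ∀ f, MemHp n p f → hpNorm n p (T f) ≤ C * hpNorm n p f}

/-- The one-point compactification `ℝ̂ⁿ = ℝⁿ ∪ {∞}`. -/
abbrev EuclHat (n : ℕ) := OnePoint (Eucl n)

/-- Reflection in the sphere `S(a, r)`, as a self-map of `ℝ̂ⁿ`: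
`x ↦ a + r²(x−a)/|x−a|²`, with `a ↦ ∞` and `∞ ↦ a`. -/
def sphereRefl (n : ℕ) (a : Eucl n) (r : ℝ) : EuclHat n → EuclHat n :=
  OnePoint.rec (↑a)
    (fun x => if x = a then OnePoint.infty
      else ↑(a + (r ^ 2 / ‖x - a‖ ^ 2) • (x - a)))

/-- Reflection in the hyperplane `{x : x·a = t}` (`a` a unit vector), as a self-map of `ℝ̂ⁿ`:
`x ↦ x − 2(x·a − t)a`, with `∞ ↦ ∞`. -/
def hyperRefl (n : ℕ) (a : Eucl n) (t : ℝ) : EuclHat n → EuclHat n :=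
  OnePoint.rec OnePoint.infty
    (fun x => ↑(x - (2 * (⟪x, a⟫_ℝ - t)) • a))

/-- A reflection of `ℝ̂ⁿ` in a sphere or a hyperplane. -/
def IsReflection (n : ℕ) (f : EuclHat n → EuclHat n) : Prop :=
  (∃ a r, 0 < r ∧ f = sphereRefl n a r) ∨
    (∃ a t, ‖a‖ = 1 ∧ f = hyperRefl n a t)

/-- A Möbius transformation of `ℝ̂ⁿ`: a finite composition of reflections in
spheres or hyperplanes. -/
def IsMobiusHat (n : ℕ) (g : EuclHat n → EuclHat n) : Prop :=
  ∃ L : List (EuclHat n → EuclHat n), L ≠ [] ∧ (∀ f ∈ L, IsReflection n f) ∧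
    g = L.foldr (· ∘ ·) id

/-- `φ : ℝⁿ → ℝⁿ` is, on `Ω`, the restriction of a Möbius transformation of `ℝ̂ⁿ`. -/
def IsMobiusRestr (n : ℕ) (φ : Eucl n → Eucl n) (Ω : Set (Eucl n)) : Prop :=
  ∃ g : EuclHat n → EuclHat n, IsMobiusHat n g ∧ ∀ x ∈ Ω, g ↑x = ↑(φ x)

/-- `φ ∈ Möb(B)`: `φ` agrees, on an open neighborhood of the closed unit ball, with a
Möbius transformation of `ℝ̂ⁿ`, and `φ` maps `B` bijectively onto `B`.  (Such a `φ` is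
the canonical extension of the Möbius transformation to the closed unit ball.) -/
def IsMobiusBall (n : ℕ) (φ : Eucl n → Eucl n) : Prop :=
  (∃ U : Set (Eucl n), IsOpen U ∧ Metric.closedBall 0 1 ⊆ U ∧ IsMobiusRestr n φ U) ∧
    Set.BijOn φ (uBall n) (uBall n)

/-- The nontangential approach region `Γ_δ(ζ) = {x ∈ B : |x − ζ| < (δ/2)(1 − |x|²)}`. -/
def ntRegion (n : ℕ) (δ : ℝ) (ζ : Eucl n) : Set (Eucl n) :=
  {x | x ∈ uBall n ∧ ‖x - ζ‖ < δ / 2 * (1 - ‖x‖ ^ 2)}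

/-- `g` has nontangential limit `L` at `ζ ∈ S`. -/
def HasNTLimit (n : ℕ) (g : Eucl n → ℂ) (ζ : Eucl n) (L : ℂ) : Prop :=
  ∀ δ : ℝ, 1 < δ → Filter.Tendsto g (nhdsWithin ζ (ntRegion n δ ζ)) (nhds L)

/-- The Poisson kernel `P(x, ζ) = (1 − |x|²)/|x − ζ|ⁿ` for the unit ball. -/
def poissonK (n : ℕ) (x ζ : Eucl n) : ℝ := (1 - ‖x‖ ^ 2) / ‖x - ζ‖ ^ n

/-- The extended Poisson kernel `P_y(x) = (1 − |x|²|y|²)/(1 − 2x·y + |x|²|y|²)^{n/2}`. -/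
def extPoisson (n : ℕ) (y x : Eucl n) : ℝ :=
  (1 - ‖x‖ ^ 2 * ‖y‖ ^ 2) / (1 - 2 * ⟪x, y⟫_ℝ + ‖x‖ ^ 2 * ‖y‖ ^ 2) ^ ((n : ℝ) / 2)

/-- The Gauss hypergeometric function `₂F₁(a, b; c; r) = ∑ₖ (a)ₖ(b)ₖ/((c)ₖ k!) rᵏ`. -/
def gaussHyper (a b c r : ℝ) : ℝ :=
  ∑' k : ℕ, ((ascPochhammer ℝ k).eval a * (ascPochhammer ℝ k).eval b) /
    ((ascPochhammer ℝ k).eval c * (Nat.factorial k)) * r ^ k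

/-- A linear operator on (the function class) `h^p(B)`. -/
def IsLinOnHp (n : ℕ) (p : ℝ≥0∞) (T : (Eucl n → ℂ) → (Eucl n → ℂ)) : Prop :=
  (∀ f, MemHp n p f → MemHp n p (T f)) ∧
    (∀ f g, MemHp n p f → MemHp n p g → T (f + g) = T f + T g) ∧
    (∀ (c : ℂ) (f), MemHp n p f → T (c • f) = c • T f)

/-- A compact operator on `h^p(B)`: a linear operator mapping the unit ball of `h^p(B)`
to a totally bounded set. -/
def IsCompactOnHp (n : ℕ) (p : ℝ≥0∞) (K : (Eucl n → ℂ) → (Eucl n → ℂ)) : Prop :=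
  IsLinOnHp n p K ∧
    ∀ ε : ℝ, 0 < ε → ∃ G : Finset (Eucl n → ℂ),
      ∀ f, MemHp n p f → hpNorm n p f ≤ 1 → ∃ g ∈ G, hpNorm n p (K f - g) ≤ ε

/-- The essential norm of an operator `T` on `h^p(B)`: the distance, in operator norm,
from `T` to the compact operators on `h^p(B)`. -/
def essNormHp (n : ℕ) (p : ℝ≥0∞) (T : (Eucl n → ℂ) → (Eucl n → ℂ)) : ℝ :=
  sInf {c : ℝ | ∃ K, IsCompactOnHp n p K ∧ opNormHp n p (fun f => T f - K f) = c}

/-- The duality pairing `⟨f, g⟩ = ∫_S f* g* dσ`, relative to a boundary-function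
assignment `bd`. -/
def hpPairing (n : ℕ) (bd : (Eucl n → ℂ) → (Eucl n → ℂ)) (f g : Eucl n → ℂ) : ℂ :=
  ∫ ζ, bd f ζ * bd g ζ ∂(sphMeasure n)

end

/-! ### Harmonic functions built from powers of the distance -/

section MobiusHarmonic

variable {n : ℕ}

lemma lap_congr {F : Type*} [NormedAddCommGroup F] [NormedSpace ℝ F]
    {f g : Eucl n → F} {x : Eucl n} (h : f =ᶠ[𝓝 x] g) : lap f x = lap g x := by
  unfold lap
  rw [(h.iteratedFDeriv ℝ 2).eq_of_nhds]

lemma HarmOn.congr {f g : Eucl n → ℝ} {s : Set (Eucl n)} (hs : IsOpen s)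
    (hg : HarmOn g s) (h : ∀ x ∈ s, f x = g x) : HarmOn f s := by
  refine ⟨hg.1.congr h, fun x hx => ?_⟩
  rw [lap_congr (g := g) (Filter.eventually_of_mem (hs.mem_nhds hx) h)]
  exact hg.2 x hx

lemma HarmOn.add {f g : Eucl n → ℝ} {s : Set (Eucl n)} (hs : IsOpen s)
    (hf : HarmOn f s) (hg : HarmOn g s) : HarmOn (fun x => f x + g x) s := by
  refine ⟨hf.1.add hg.1, fun x hx => ?_⟩
  have h1 : ContDiffAt ℝ 2 f x := hf.1.contDiffAt (hs.mem_nhds hx)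
  have h2 : ContDiffAt ℝ 2 g x := hg.1.contDiffAt (hs.mem_nhds hx)
  have e : iteratedFDeriv ℝ 2 (fun x => f x + g x) x
      = iteratedFDeriv ℝ 2 f x + iteratedFDeriv ℝ 2 g x := iteratedFDeriv_add_apply h1 h2
  have h3 := hf.2 x hx
  have h4 := hg.2 x hx
  unfold lap at *
  simp only [e, _root_.add_apply, Finset.sum_add_distrib, h3, h4, add_zero]

lemma contDiffAt_powForm (k s : ℝ) (v a x : Eucl n) (hx : x ≠ a) :
    ContDiffAt ℝ 2 (fun y : Eucl n => (k + ⟪v, y - a⟫_ℝ) * (‖y - a‖ ^ 2) ^ s) x := by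
  have hz : ‖x - a‖ ^ 2 ≠ 0 := by simpa [sub_eq_zero] using hx
  have h1 : ContDiffAt ℝ 2 (fun y : Eucl n => y - a) x := by fun_prop
  exact (contDiffAt_const.add (contDiffAt_const.inner ℝ h1)).mul
    ((h1.norm_sq ℝ).rpow_const_of_ne hz)

lemma fderiv_powForm (k s : ℝ) (v a x e : Eucl n) (hx : x ≠ a) :
    fderiv ℝ (fun y : Eucl n => (k + ⟪v, y - a⟫_ℝ) * (‖y - a‖ ^ 2) ^ s) x e
      = ⟪v, e⟫_ℝ * (‖x - a‖ ^ 2) ^ s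
        + (k + ⟪v, x - a⟫_ℝ) * (s * (‖x - a‖ ^ 2) ^ (s - 1) * (2 * ⟪x - a, e⟫_ℝ)) := by
  have hz : ‖x - a‖ ^ 2 ≠ 0 := by simpa [sub_eq_zero] using hx
  have h1 : HasFDerivAt (fun y : Eucl n => y - a) (ContinuousLinearMap.id ℝ (Eucl n)) x :=
    (hasFDerivAt_id x).sub_const a
  have h2 := ((innerSL ℝ v).hasFDerivAt.comp x h1).const_add k
  have h3 := h1.norm_sq.rpow_const (p := s) (Or.inl hz)
  have h4 := h2.mul h3
  have h5 : fderiv ℝ (fun y : Eucl n => (k + ⟪v, y - a⟫_ℝ) * (‖y - a‖ ^ 2) ^ s) x = _ :=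
    h4.fderiv
  rw [h5]
  simp [-map_sub]
  ring

lemma fderiv_fderiv_powForm (k s : ℝ) (v a x e : Eucl n) (hx : x ≠ a) :
    fderiv ℝ (fderiv ℝ (fun y : Eucl n => (k + ⟪v, y - a⟫_ℝ) * (‖y - a‖ ^ 2) ^ s)) x e e
      = 4 * s * (‖x - a‖ ^ 2) ^ (s - 1) * (⟪v, e⟫_ℝ * ⟪x - a, e⟫_ℝ)
        + (k + ⟪v, x - a⟫_ℝ) * s * ((s - 1) * (‖x - a‖ ^ 2) ^ (s - 2) * (4 * ⟪x - a, e⟫_ℝ ^ 2)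
          + 2 * (‖x - a‖ ^ 2) ^ (s - 1) * ⟪e, e⟫_ℝ) := by
  have hz : ‖x - a‖ ^ 2 ≠ 0 := by simpa [sub_eq_zero] using hx
  set f : Eucl n → ℝ := fun y : Eucl n => (k + ⟪v, y - a⟫_ℝ) * (‖y - a‖ ^ 2) ^ s with hf
  have hd : DifferentiableAt ℝ (fderiv ℝ f) x :=
    ((contDiffAt_powForm k s v a x hx).fderiv_right (m := 1) (by norm_num)).differentiableAt
      (by norm_num)
  have h0 : fderiv ℝ (fderiv ℝ f) x e e = fderiv ℝ (fun y => fderiv ℝ f y e) x e := by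
    have := (hd.hasFDerivAt.clm_apply (hasFDerivAt_const e x)).fderiv
    rw [this]; simp
  have h1 : (fun y => fderiv ℝ f y e) =ᶠ[𝓝 x] fun y => ⟪v, e⟫_ℝ * (‖y - a‖ ^ 2) ^ s
        + (k + ⟪v, y - a⟫_ℝ) * (s * (‖y - a‖ ^ 2) ^ (s - 1) * (2 * ⟪y - a, e⟫_ℝ)) := by
    filter_upwards [isOpen_ne.mem_nhds hx] with y hy
    exact fderiv_powForm k s v a y e hy
  rw [h0, h1.fderiv_eq]
  have h1 : HasFDerivAt (fun y : Eucl n => y - a) (ContinuousLinearMap.id ℝ (Eucl n)) x :=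
    (hasFDerivAt_id x).sub_const a
  have h2 := ((innerSL ℝ v).hasFDerivAt.comp x h1).const_add k
  have h3 := h1.norm_sq.rpow_const (p := s) (Or.inl hz)
  have h4 := h1.norm_sq.rpow_const (p := s - 1) (Or.inl hz)
  have h5 := (h1.inner ℝ (hasFDerivAt_const e x)).const_mul 2
  have h6 := (h3.const_mul ⟪v, e⟫_ℝ).add (h2.mul ((h4.const_mul s).mul h5))
  have h7 : fderiv ℝ (fun y : Eucl n => ⟪v, e⟫_ℝ * (‖y - a‖ ^ 2) ^ s
        + (k + ⟪v, y - a⟫_ℝ) * (s * (‖y - a‖ ^ 2) ^ (s - 1) * (2 * ⟪y - a, e⟫_ℝ))) x = _ :=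
    h6.fderiv
  rw [h7]
  simp [-map_sub, fderivInnerCLM_apply]
  rw [show s - 1 - 1 = s - 2 by ring]
  ring

/-- The Laplacian of `(k + ⟪v, z⟫) |z|^{2s}` with `z = x - a`. -/
lemma lap_powForm (k s : ℝ) (v a x : Eucl n) (hx : x ≠ a) :
    lap (fun y : Eucl n => (k + ⟪v, y - a⟫_ℝ) * (‖y - a‖ ^ 2) ^ s) x
      = s * (‖x - a‖ ^ 2) ^ (s - 1) *
        (4 * ⟪v, x - a⟫_ℝ + (k + ⟪v, x - a⟫_ℝ) * (4 * s - 4 + 2 * n)) := by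
  have hz : 0 < ‖x - a‖ ^ 2 := by
    have : x - a ≠ 0 := sub_ne_zero.2 hx
    positivity
  have hb : ∀ w : Eucl n, ∀ i, ⟪w, basisV n i⟫_ℝ = w i := by
    intro w i; simp [basisV, EuclideanSpace.inner_single_right]
  have e1 : ∑ i, v i * (x - a) i = ⟪v, x - a⟫_ℝ := by
    simp [PiLp.inner_apply, mul_comm]
  have e2 : ∑ i, (x - a) i ^ 2 = ‖x - a‖ ^ 2 := by
    rw [EuclideanSpace.norm_sq_eq]; simp
  have e3 : (‖x - a‖ ^ 2) ^ (s - 1) = (‖x - a‖ ^ 2) ^ (s - 2) * ‖x - a‖ ^ 2 := by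
    rw [show s - 1 = (s - 2) + 1 by ring, Real.rpow_add_one hz.ne']
  unfold lap
  simp only [iteratedFDeriv_two_apply, Matrix.cons_val_zero, Matrix.cons_val_one]
  rw [Finset.sum_congr rfl fun i _ => fderiv_fderiv_powForm k s v a x (basisV n i) hx]
  have hone : ∀ i, basisV n i i = 1 := by
    intro i; simp [basisV]
  simp only [hb, hone]
  rw [Finset.sum_add_distrib, ← Finset.mul_sum, ← Finset.mul_sum, Finset.sum_add_distrib,
    ← Finset.mul_sum, ← Finset.mul_sum, e1, e2]
  rw [e3]
  simp
  ring

/-- The three harmonic families needed: affine functions (`s = 0`), multiples of the fundamental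
solution `|z|^{2-n}`, and its directional derivatives `⟪v, z⟫ |z|^{-n}`, where `z = y - a`. -/
lemma harmOn_powForm {k s : ℝ} {v a : Eucl n} {Ω : Set (Eucl n)} (ha : a ∉ Ω)
    (h : s = 0 ∨ (v = 0 ∧ s = (2 - (n : ℝ)) / 2) ∨ (k = 0 ∧ s = -(n : ℝ) / 2)) :
    HarmOn (fun y : Eucl n => (k + ⟪v, y - a⟫_ℝ) * (‖y - a‖ ^ 2) ^ s) Ω := by
  have hne : ∀ x ∈ Ω, x ≠ a := fun x hx h => ha (h ▸ hx)
  refine ⟨fun x hx => (contDiffAt_powForm k s v a x (hne x hx)).contDiffWithinAt,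
    fun x hx => ?_⟩
  rw [lap_powForm k s v a x (hne x hx)]
  rcases h with rfl | ⟨rfl, rfl⟩ | ⟨rfl, rfl⟩
  · simp
  · simp only [inner_zero_left]; ring
  · ring

/-! ### Normal form of Möbius transformations -/

/-- `g` acts on `ℝ̂ⁿ` as the similarity `x ↦ b + c A x`, fixing `∞`. -/
def IsSim (g : EuclHat n → EuclHat n) : Prop :=
  ∃ (c : ℝ) (A : Eucl n ≃ₗᵢ[ℝ] Eucl n) (b : Eucl n), 0 < c ∧ g OnePoint.infty = OnePoint.infty ∧
    ∀ x : Eucl n, g ↑x = ↑(b + c • A x)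

/-- `g` acts on `ℝ̂ⁿ` as the inversion in the unit sphere centred at `a` followed by a
similarity; `a` is the pole of `g` and `b` the image of `∞`. -/
def IsInvSim (g : EuclHat n → EuclHat n) : Prop :=
  ∃ (c : ℝ) (A : Eucl n ≃ₗᵢ[ℝ] Eucl n) (a b : Eucl n), 0 < c ∧ g OnePoint.infty = ↑b ∧
    g ↑a = OnePoint.infty ∧
    ∀ x : Eucl n, x ≠ a → g ↑x = ↑(b + (c / ‖x - a‖ ^ 2) • A (x - a))

lemma hyperRefl_coe (a : Eucl n) (t : ℝ) (x : Eucl n) :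
    hyperRefl n a t ↑x = ↑(x - (2 * (⟪x, a⟫_ℝ - t)) • a) := rfl

lemma hyperRefl_infty (a : Eucl n) (t : ℝ) :
    hyperRefl n a t OnePoint.infty = OnePoint.infty := rfl

lemma sphereRefl_infty (a : Eucl n) (r : ℝ) :
    sphereRefl n a r OnePoint.infty = ↑a := rfl

lemma sphereRefl_self (a : Eucl n) (r : ℝ) :
    sphereRefl n a r ↑a = OnePoint.infty := if_pos rfl

lemma sphereRefl_coe (a : Eucl n) (r : ℝ) {x : Eucl n} (hx : x ≠ a) :
    sphereRefl n a r ↑x = ↑(a + (r ^ 2 / ‖x - a‖ ^ 2) • (x - a)) := if_neg hx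

/-- Valid also for `d = 0`, where the quotient is `0` and the reflection is the identity. -/
lemma reflection_orth_apply (d z : Eucl n) :
    (ℝ ∙ d)ᗮ.reflection z = z - (2 * ⟪d, z⟫_ℝ / ‖d‖ ^ 2) • d := by
  rw [Submodule.reflection_orthogonal_apply, Submodule.reflection_singleton_apply]
  simp
  module

/-- A hyperplane reflection is affine, with a linear isometry as linear part. -/
lemma hyperRefl_affine {a : Eucl n} (t : ℝ) (ha : ‖a‖ = 1) (x y : Eucl n) :
    x + y - (2 * (⟪x + y, a⟫_ℝ - t)) • a
      = (x - (2 * (⟪x, a⟫_ℝ - t)) • a) + (ℝ ∙ a)ᗮ.reflection y := by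
  rw [reflection_orth_apply, ha, inner_add_left, real_inner_comm a y]
  module

/-- Normal forms are stable under postcomposition with a reflection. The substantial case is a
sphere reflection, centred at `p`, of a map `x ↦ b + c A (x - a) / |x - a|²` with `b ≠ p`: the
result has its pole at the preimage of `p` and its linear part is `A` composed with the reflection
in the hyperplane orthogonal to `A⁻¹ (b - p)`. -/
lemma sim_reflection {g f : EuclHat n → EuclHat n} (hf : IsReflection n f)
    (hg : IsSim g ∨ IsInvSim g) : IsSim (f ∘ g) ∨ IsInvSim (f ∘ g) := by
  rcases hf with ⟨p, r, hr, rfl⟩ | ⟨p, t, hp, rfl⟩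
  · rcases hg with ⟨c, A, b, hc, hinf, hg⟩ | ⟨c, A, a, b, hc, hinf, ha, hg⟩
    · right
      -- the pole is the point sent to the centre `p` by the similarity
      obtain ⟨a, haa⟩ : ∃ a, b + c • A a = p := by
        refine ⟨A.symm (c⁻¹ • (p - b)), ?_⟩
        rw [A.apply_symm_apply, smul_smul, mul_inv_cancel₀ hc.ne']; module
      refine ⟨r ^ 2 / c, A, a, p, by positivity, ?_, ?_, fun x hx => ?_⟩
      · simp only [Function.comp, hinf, sphereRefl_infty]
      · simp only [Function.comp, hg, haa, sphereRefl_self]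
      · have hz : 0 < ‖x - a‖ := norm_pos_iff.2 (sub_ne_zero.2 hx)
        have e : b + c • A x - p = c • A (x - a) := by
          rw [← haa, map_sub]; module
        have hne : b + c • A x ≠ p := by
          rw [← sub_ne_zero, e]
          simp [-map_sub, hc.ne', sub_ne_zero.2 hx]
        simp only [Function.comp, hg]
        rw [sphereRefl_coe p r hne, e, norm_smul, A.norm_map, Real.norm_of_nonneg hc.le,
          smul_smul]
        congr 3
        field_simp
    · by_cases hbp : b = p
      · left
        subst hbp
        refine ⟨r ^ 2 / c, A, b - (r ^ 2 / c) • A a, by positivity, ?_, fun x => ?_⟩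
        · simp only [Function.comp, hinf, sphereRefl_self]
        · by_cases hx : x = a
          · subst hx
            simp only [Function.comp, ha, sphereRefl_infty]
            congr 1; module
          · have hz : 0 < ‖x - a‖ := norm_pos_iff.2 (sub_ne_zero.2 hx)
            have hne : b + (c / ‖x - a‖ ^ 2) • A (x - a) ≠ b := by
              simp [-map_sub, hc.ne', sub_ne_zero.2 hx]
            simp only [Function.comp, hg x hx]
            rw [sphereRefl_coe b r hne, add_sub_cancel_left, norm_smul, A.norm_map,
              Real.norm_of_nonneg (by positivity), smul_smul]
            have : r ^ 2 / (c / ‖x - a‖ ^ 2 * ‖x - a‖) ^ 2 * (c / ‖x - a‖ ^ 2) = r ^ 2 / c := by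
              field_simp
            rw [this, map_sub]
            congr 1; module
      · right
        -- with `d = A⁻¹ (b - p)` the pole is `a - c d / |d|²`
        obtain ⟨d, hd⟩ : ∃ d, A d = b - p := ⟨A.symm (b - p), A.apply_symm_apply _⟩
        have hd0 : d ≠ 0 := by
          rintro rfl
          rw [map_zero] at hd
          exact hbp (sub_eq_zero.1 hd.symm)
        have hdn : 0 < ‖d‖ := norm_pos_iff.2 hd0
        set e : Eucl n := (c / ‖d‖ ^ 2) • d with he
        have he0 : e ≠ 0 := smul_ne_zero (by positivity) hd0
        have hen : ‖e‖ = c / ‖d‖ := by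
          rw [he, norm_smul, Real.norm_of_nonneg (by positivity)]; field_simp
        refine ⟨r ^ 2 * c / ‖d‖ ^ 2, (ℝ ∙ d)ᗮ.reflection.trans A, a - e,
          p + (r ^ 2 / ‖d‖ ^ 2) • A d, by positivity, ?_, ?_, fun x hx => ?_⟩
        · simp only [Function.comp, hinf]
          rw [sphereRefl_coe p r hbp, ← hd, A.norm_map]
        · have hne : a - e ≠ a := by simpa using he0
          have e1 : b + (c / ‖a - e - a‖ ^ 2) • A (a - e - a) = p := by
            rw [show a - e - a = -e by abel, norm_neg, hen, map_neg, he, map_smul, hd, smul_neg,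
              smul_smul]
            have : c / (c / ‖d‖) ^ 2 * (c / ‖d‖ ^ 2) = 1 := by field_simp
            rw [this]; module
          simp only [Function.comp, hg _ hne, e1, sphereRefl_self]
        · obtain ⟨z, rfl⟩ : ∃ z, x = a - e + z := ⟨x - (a - e), by abel⟩
          have hz0 : z ≠ 0 := by rintro rfl; simp at hx
          have hzn : 0 < ‖z‖ := norm_pos_iff.2 hz0
          rw [show a - e + z - (a - e) = z by abel]
          -- the old pole `a` is finite for the new map: `g a = ∞` and the reflection sends `∞` to `p`
          by_cases hza : a - e + z = a
          · have hze : z = e := by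
              have := congrArg (fun w => w - a + e) hza
              simpa [add_comm, sub_eq_add_neg, add_assoc, add_left_comm] using this
            subst z
            rw [hza]
            simp only [Function.comp, ha, sphereRefl_infty]
            congr 1
            rw [LinearIsometryEquiv.trans_apply, reflection_orth_apply, hen]
            rw [he, inner_smul_right, real_inner_self_eq_norm_sq, ← sub_smul, map_smul, smul_smul,
              add_assoc, ← add_smul]
            have : r ^ 2 / ‖d‖ ^ 2 + r ^ 2 * c / ‖d‖ ^ 2 / (c / ‖d‖) ^ 2 *
              (c / ‖d‖ ^ 2 - 2 * (c / ‖d‖ ^ 2 * ‖d‖ ^ 2) / ‖d‖ ^ 2) = 0 := by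
              field_simp; ring
            rw [this]; simp
          · have hy0 : z - e ≠ 0 := by
              intro h; apply hza
              rw [show a - e + z = a + (z - e) by abel, h, add_zero]
            have hyn : 0 < ‖z - e‖ := norm_pos_iff.2 hy0
            simp only [Function.comp, hg _ hza]
            rw [show a - e + z - a = z - e by abel]
            have e1 : b + (c / ‖z - e‖ ^ 2) • A (z - e) - p
                = A (d + (c / ‖z - e‖ ^ 2) • (z - e)) := by
              rw [map_add, map_smul, hd]; abel
            -- `‖e‖ = c / ‖d‖`, so the mixed terms below combine into a multiple of `‖z‖²`
            have hye : ‖z - e‖ ^ 2 = ‖z‖ ^ 2 - 2 * (c / ‖d‖ ^ 2) * ⟪d, z⟫_ℝ + c ^ 2 / ‖d‖ ^ 2 := by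
              rw [norm_sub_sq_real, hen, he, inner_smul_right, real_inner_comm]; ring
            have e2 : ‖d + (c / ‖z - e‖ ^ 2) • (z - e)‖ ^ 2
                = ‖d‖ ^ 2 * ‖z‖ ^ 2 / ‖z - e‖ ^ 2 := by
              rw [norm_add_sq_real, inner_smul_right, norm_smul,
                Real.norm_of_nonneg (by positivity : 0 ≤ c / ‖z - e‖ ^ 2), mul_pow, inner_sub_right]
              have : ⟪d, e⟫_ℝ = c := by
                rw [he, inner_smul_right, real_inner_self_eq_norm_sq]; field_simp
              rw [this]
              have h3 : ‖d‖ ^ 2 * ‖z - e‖ ^ 2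
                  = ‖d‖ ^ 2 * ‖z‖ ^ 2 - 2 * c * ⟪d, z⟫_ℝ + c ^ 2 := by
                rw [hye]; field_simp
              field_simp
              linear_combination h3
            have hne : b + (c / ‖z - e‖ ^ 2) • A (z - e) ≠ p := by
              rw [← sub_ne_zero, e1, ← norm_ne_zero_iff, A.norm_map]
              intro h0
              rw [h0] at e2
              have : 0 < ‖d‖ ^ 2 * ‖z‖ ^ 2 / ‖z - e‖ ^ 2 := by positivity
              rw [← e2] at this
              simp at this
            rw [sphereRefl_coe p r hne, e1, A.norm_map, e2, add_assoc,
              LinearIsometryEquiv.trans_apply, ← map_smul, ← map_smul, ← map_smul, ← map_add]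
            congr 3
            rw [reflection_orth_apply]
            rw [smul_add, smul_smul, smul_sub (_ : ℝ) z e, he, smul_sub _ z, smul_smul, smul_smul]
            rw [← he]
            have h3 : ‖z - e‖ ^ 2 / ‖z‖ ^ 2 = 1 - 2 * (c / ‖d‖ ^ 2) * ⟪d, z⟫_ℝ / ‖z‖ ^ 2
                + c ^ 2 / ‖d‖ ^ 2 / ‖z‖ ^ 2 := by
              rw [hye]; field_simp
            have c1 : r ^ 2 / (‖d‖ ^ 2 * ‖z‖ ^ 2 / ‖z - e‖ ^ 2) * (c / ‖z - e‖ ^ 2)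
                = r ^ 2 * c / ‖d‖ ^ 2 / ‖z‖ ^ 2 := by
              field_simp
            have c2 : r ^ 2 / (‖d‖ ^ 2 * ‖z‖ ^ 2 / ‖z - e‖ ^ 2)
                = r ^ 2 / ‖d‖ ^ 2 * (1 - 2 * (c / ‖d‖ ^ 2) * ⟪d, z⟫_ℝ / ‖z‖ ^ 2
                + c ^ 2 / ‖d‖ ^ 2 / ‖z‖ ^ 2) := by
              rw [← h3]; field_simp
            rw [c1, c2]
            match_scalars <;> field_simp <;> ring
  · have key : ∀ x y : Eucl n, hyperRefl n p t ↑(x + y)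
        = ↑((x - (2 * (⟪x, p⟫_ℝ - t)) • p) + (ℝ ∙ p)ᗮ.reflection y) := fun x y => by
      rw [hyperRefl_coe, hyperRefl_affine t hp]
    rcases hg with ⟨c, A, b, hc, hinf, hg⟩ | ⟨c, A, a, b, hc, hinf, ha, hg⟩
    · left
      refine ⟨c, A.trans (ℝ ∙ p)ᗮ.reflection, b - (2 * (⟪b, p⟫_ℝ - t)) • p, hc, ?_, fun x => ?_⟩
      · simp only [Function.comp, hinf, hyperRefl_infty]
      · simp only [Function.comp, hg, key, map_smul, LinearIsometryEquiv.trans_apply]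
    · right
      refine ⟨c, A.trans (ℝ ∙ p)ᗮ.reflection, a, b - (2 * (⟪b, p⟫_ℝ - t)) • p, hc, ?_, ?_,
        fun x hx => ?_⟩
      · simp only [Function.comp, hinf, hyperRefl_coe]
      · simp only [Function.comp, ha, hyperRefl_infty]
      · simp only [Function.comp, hg x hx, key, map_smul, LinearIsometryEquiv.trans_apply]

/-- Normal form: every Möbius transformation is a similarity or a similarity composed with an
inversion. -/
lemma IsMobiusHat.normalForm {g : EuclHat n → EuclHat n} (hg : IsMobiusHat n g) :
    IsSim g ∨ IsInvSim g := by
  obtain ⟨L, -, hL, rfl⟩ := hg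
  induction L with
  | nil => exact Or.inl ⟨1, LinearIsometryEquiv.refl ℝ _, 0, one_pos, rfl, fun x => by simp⟩
  | cons f L ih =>
    rw [List.foldr_cons]
    exact sim_reflection (hL f (by simp)) (ih fun f' hf' => hL f' (by simp [hf']))

/-! ### Conformal factor and Poisson kernel -/

/-- `|Dφ(x)|` is the conformal factor of `φ` at `x`: a linear isometry has determinant `±1`. -/
lemma normDeriv_of_hasFDerivAt (hn : n ≠ 0) {φ : Eucl n → Eucl n} {x : Eucl n} {s : ℝ}
    (hs : 0 ≤ s) (A : Eucl n ≃ₗᵢ[ℝ] Eucl n)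
    (h : HasFDerivAt φ (s • (A : Eucl n →L[ℝ] Eucl n)) x) : normDeriv φ x = s := by
  set e := EuclideanSpace.basisFun (Fin n) ℝ
  have hM : jacMatrix φ x = s • (e.toBasis.toMatrix (e.map A)) := by
    ext i j
    simp [jacMatrix, h.fderiv, e, Module.Basis.toMatrix_apply, basisV]
  have hdet : |(e.toBasis.toMatrix (e.map A)).det| = 1 := by
    rcases e.det_to_matrix_orthonormalBasis_real (e.map A) with h | h
    · rw [← e.toBasis.det_apply, h, abs_one]
    · rw [← e.toBasis.det_apply, h, abs_neg, abs_one]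
  rw [normDeriv, hM, Matrix.det_smul, abs_mul, hdet, mul_one, Fintype.card_fin,
    abs_of_nonneg (by positivity), Real.pow_rpow_inv_natCast hs hn]

open EuclideanGeometry in
lemma inversion_eq_add (a : Eucl n) (r : ℝ) (x : Eucl n) :
    inversion a r x = a + (r ^ 2 / ‖x - a‖ ^ 2) • (x - a) := by
  rw [inversion, vsub_eq_sub, vadd_eq_add, dist_eq_norm, div_pow, add_comm]

open EuclideanGeometry in
/-- If `φ = J ∘ R` near `x`, with `J` the inversion in the unit sphere centred at `η ∈ S`, and `R`
is conformal at `x` with conformal factor `s`, the weighted Poisson kernel becomes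
`-(1 + 2⟪η, R x - η⟫) s^{(n-2)/2}`. -/
lemma poisson_mul_normDeriv (hn : n ≠ 0) {η : Eucl n} (hη : ‖η‖ = 1) {φ R : Eucl n → Eucl n}
    {x : Eucl n} (hφ : φ =ᶠ[𝓝 x] fun y => inversion η 1 (R y)) (hR : R x ≠ η) {s : ℝ} (hs : 0 < s)
    (A : Eucl n ≃ₗᵢ[ℝ] Eucl n) (hd : HasFDerivAt R (s • (A : Eucl n →L[ℝ] Eucl n)) x) :
    poissonK n (φ x) η * normDeriv φ x ^ (((n : ℝ) - 2) / 2)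
      = -(1 + 2 * ⟪η, R x - η⟫_ℝ) * s ^ (((n : ℝ) - 2) / 2) := by
  set ρ := R x - η with hρ
  have hρ0 : 0 < ‖ρ‖ := norm_pos_iff.2 (sub_ne_zero.2 hR)
  have hφx : φ x = η + (1 / ‖ρ‖ ^ 2) • ρ := by
    rw [hφ.eq_of_nhds, inversion_eq_add, one_pow]
  have hD : HasFDerivAt φ ((s / ‖ρ‖ ^ 2) •
      ((A.trans (ℝ ∙ ρ)ᗮ.reflection : Eucl n ≃ₗᵢ[ℝ] Eucl n) : Eucl n →L[ℝ] Eucl n)) x := by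
    have h1 := ((hasFDerivAt_inversion (R := 1) hR).comp x hd).congr_of_eventuallyEq hφ
    refine h1.congr_fderiv ?_
    ext1 v
    simp [dist_eq_norm, smul_smul, ← hρ]
    ring_nf
  rw [normDeriv_of_hasFDerivAt hn (by positivity) _ hD]
  have h1 : ‖φ x - η‖ = 1 / ‖ρ‖ := by
    rw [hφx, add_sub_cancel_left, norm_smul, Real.norm_of_nonneg (by positivity)]
    field_simp
  have h2 : 1 - ‖φ x‖ ^ 2 = -(1 + 2 * ⟪η, ρ⟫_ℝ) / ‖ρ‖ ^ 2 := by
    rw [hφx, norm_add_sq_real, hη, inner_smul_right, norm_smul,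
      Real.norm_of_nonneg (by positivity)]
    field_simp; ring
  have h3 : (‖ρ‖ ^ 2) ^ (((n : ℝ) - 2) / 2) = ‖ρ‖ ^ n / ‖ρ‖ ^ 2 := by
    rw [← Real.rpow_natCast, ← Real.rpow_mul hρ0.le, Nat.cast_two,
      show 2 * (((n : ℝ) - 2) / 2) = n - (2 : ℕ) by push_cast; ring, Real.rpow_sub hρ0,
      Real.rpow_natCast, Real.rpow_natCast, Real.rpow_two]
  rw [poissonK, h1, h2, Real.div_rpow hs.le (by positivity), h3, one_div, inv_pow]
  field_simp

end MobiusHarmonic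

/-- For `n ≥ 3`, `φ` the restriction to `B` of a Möbius transformation
of `ℝ̂ⁿ` with `φ(B) ⊆ B`, and `η ∈ S`, the function `x ↦ P(φ(x),η)|Dφ(x)|^{(n−2)/2}`
is harmonic on `B`. -/
theorem poisson_comp_mobius_harmonic (n : ℕ) (hn : 3 ≤ n)
    (φ : Eucl n → Eucl n) (hφ : IsMobiusRestr n φ (uBall n))
    (hmaps : Set.MapsTo φ (uBall n) (uBall n))
    (η : Eucl n) (hη : η ∈ uSphere n) :
    HarmOn (fun x => poissonK n (φ x) η * normDeriv φ x ^ (((n : ℝ) - 2) / 2))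
      (uBall n) := by
  have hη1 : ‖η‖ = 1 := by simpa [uSphere] using hη
  have hn0 : n ≠ 0 := by omega
  have hopen : IsOpen (uBall n) := Metric.isOpen_ball
  have hηB : η ∉ uBall n := by simp [uBall, hη1]
  obtain ⟨g, hg, hgφ⟩ := hφ
  have hne : ∀ x ∈ uBall n, φ x ≠ η := fun x hx h => hηB (h ▸ hmaps hx)
  have hG : ∀ x ∈ uBall n, (sphereRefl n η 1 ∘ g) ↑x = ↑(EuclideanGeometry.inversion η 1 (φ x)) := by
    intro x hx
    rw [Function.comp, hgφ x hx, sphereRefl_coe η 1 (hne x hx), inversion_eq_add]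
  -- normal form of `R = J ∘ g`, with `J` the inversion in the unit sphere centred at `η`
  rcases sim_reflection (Or.inl ⟨η, 1, one_pos, rfl⟩) hg.normalForm with
    ⟨c, A, b, hc, -, hR⟩ | ⟨c, A, a, b, hc, -, ha, hR⟩
  · have hRφ : ∀ x ∈ uBall n, EuclideanGeometry.inversion η 1 (φ x) = b + c • A x := by
      intro x hx
      have := (hG x hx).symm.trans (hR x)
      exact OnePoint.coe_injective this
    -- `R` is a similarity, so the weighted kernel is affine; expanding it about `η` keeps the base
    -- point outside the ball
    refine HarmOn.congr hopen (harmOn_powForm (s := 0) (a := η)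
      (k := -(1 + 2 * ⟪η, b - η + c • A η⟫_ℝ) * c ^ (((n : ℝ) - 2) / 2))
      (v := (-(2 * c * c ^ (((n : ℝ) - 2) / 2))) • A.symm η) hηB (Or.inl rfl)) fun x hx => ?_
    have hφR : ∀ y ∈ uBall n, φ y = EuclideanGeometry.inversion η 1 (b + c • A y) := by
      intro y hy
      rw [← hRφ y hy, EuclideanGeometry.inversion_inversion _ one_ne_zero]
    rw [poisson_mul_normDeriv hn0 hη1 (Filter.eventually_of_mem (hopen.mem_nhds hx) hφR) ?_ hc A ?_]
    · rw [Real.rpow_zero, mul_one, inner_smul_left, A.symm.inner_map_eq_flip]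
      simp only [LinearIsometryEquiv.symm_symm, map_sub, inner_sub_right, inner_add_right,
        inner_smul_right, conj_trivial]
      ring
    · intro h
      apply hne x hx
      rw [hφR x hx, h, EuclideanGeometry.inversion_self]
    · exact ((A : Eucl n →L[ℝ] Eucl n).hasFDerivAt.const_smul c).const_add b
  · have haB : a ∉ uBall n := by
      intro h
      have := (hG a h).symm.trans ha
      exact OnePoint.coe_ne_infty _ this
    have hxa : ∀ x ∈ uBall n, x ≠ a := fun x hx h => haB (h ▸ hx)
    have hRφ : ∀ x ∈ uBall n, EuclideanGeometry.inversion η 1 (φ x)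
        = b + (c / ‖x - a‖ ^ 2) • A (x - a) := by
      intro x hx
      have := (hG x hx).symm.trans (hR x (hxa x hx))
      exact OnePoint.coe_injective this
    have hφR : ∀ y ∈ uBall n, φ y
        = EuclideanGeometry.inversion η 1 (b + (c / ‖y - a‖ ^ 2) • A (y - a)) := by
      intro y hy
      rw [← hRφ y hy, EuclideanGeometry.inversion_inversion _ one_ne_zero]
    -- the conformal factor of `R` is `c / |x - a|²`, so the weighted kernel is a combination of
    -- `|x - a|^{2-n}` and `⟪v, x - a⟫ |x - a|^{-n}`
    refine HarmOn.congr hopen (HarmOn.add hopen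
      (harmOn_powForm (s := (2 - (n : ℝ)) / 2) (a := a)
        (k := -(1 + 2 * ⟪η, b - η⟫_ℝ) * c ^ (((n : ℝ) - 2) / 2)) (v := 0) haB
        (Or.inr (Or.inl ⟨rfl, rfl⟩)))
      (harmOn_powForm (s := -(n : ℝ) / 2) (a := a) (k := 0)
        (v := (-(2 * c * c ^ (((n : ℝ) - 2) / 2))) • A.symm η) haB
        (Or.inr (Or.inr ⟨rfl, rfl⟩)))) fun x hx => ?_
    have hz : 0 < ‖x - a‖ := norm_pos_iff.2 (sub_ne_zero.2 (hxa x hx))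
    have hz2 : 0 < ‖x - a‖ ^ 2 := by positivity
    rw [poisson_mul_normDeriv (s := c / ‖x - a‖ ^ 2) hn0 hη1
      (Filter.eventually_of_mem (hopen.mem_nhds hx) hφR) ?_ (by positivity)
      ((ℝ ∙ (x - a))ᗮ.reflection.trans A) ?_]
    · have e1 : (‖x - a‖ ^ 2) ^ ((2 - (n : ℝ)) / 2)
          = ‖x - a‖ ^ 2 * (‖x - a‖ ^ 2) ^ (-(n : ℝ) / 2) := by
        rw [show (2 - (n : ℝ)) / 2 = -(n : ℝ) / 2 + 1 by ring, Real.rpow_add_one hz2.ne', mul_comm]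
      have e2 : ((‖x - a‖ ^ 2) ^ (((n : ℝ) - 2) / 2))⁻¹
          = ‖x - a‖ ^ 2 * (‖x - a‖ ^ 2) ^ (-(n : ℝ) / 2) := by
        rw [← e1, ← Real.rpow_neg hz2.le]; congr 1; ring
      rw [Real.div_rpow hc.le hz2.le, div_eq_mul_inv _ ((‖x - a‖ ^ 2) ^ (((n : ℝ) - 2) / 2)), e2, e1,
        inner_zero_left, inner_smul_left, A.symm.inner_map_eq_flip, LinearIsometryEquiv.symm_symm,
        show b + (c / ‖x - a‖ ^ 2) • A (x - a) - η = b - η + (c / ‖x - a‖ ^ 2) • A (x - a) by abel,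
        inner_add_right, inner_smul_right]
      simp only [conj_trivial]
      field_simp
      ring
    · intro h
      apply hne x hx
      rw [hφR x hx, h, EuclideanGeometry.inversion_self]
    · have h1 := EuclideanGeometry.hasFDerivAt_inversion (R := 1) (hxa x hx)
      have h2 := (((A : Eucl n →L[ℝ] Eucl n).hasFDerivAt.comp x (h1.sub_const a)).const_smul
        c).const_add b
      refine (h2.congr_fderiv ?_).congr_of_eventuallyEq (Filter.Eventually.of_forall fun y => ?_)
      · ext1 v
        simp [dist_eq_norm, smul_smul, div_eq_mul_inv]
      · simp [inversion_eq_add, smul_smul, div_eq_mul_inv]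
end

section
/- Suppose n ≥ 3. Let φ be the restriction to B of a Möbius transformation of ℝ̂ⁿ with φ(B) ⊆ B. Then for every r ∈ [0,1) and every η ∈ S, ∫_S P(φ(rζ), η)·|Dφ(rζ)|^{(n−2)/2} dσ(ζ) ≤ (1+|φ(0)|)·(1−|φ(0)|)^{1−n}·|Dφ(0)|^{(n−2)/2}. -/
/-!
Write `F x = P(φ x, η) |Dφ x| ^ ((n - 2) / 2)`. The point is that `F` is harmonic on the ball: it is
the Kelvin-type transform by `φ` of the Poisson kernel. Hence its mean over the sphere of radius `r`
is `F 0`, and `|φ 0 - η| ≥ 1 - |φ 0|` bounds `F 0` by the right-hand side (`poissonK_le`).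

Harmonicity enters only through an explicit formula. A Möbius transformation `g` acts on quadratic
functions `α|x|² + ⟪β, x⟫ + γ` by pull-back up to a positive factor `q`, and this action preserves
the Lorentz form `⟪β, β'⟫ - 2αγ' - 2α'γ` (`exists_lift`). The factor `q` is the pull-back of `1`, and
`|Dφ| = 1 / q` (`IsLift.normDeriv_eq`), by way of the distance formula
`|φ x - φ y|² q x q y = |x - y|²`. Therefore `F = N D ^ (-n / 2)`, where `N = q (1 - |φ|²)` and
`D = q |φ - η|²` are the pull-backs of `1 - |x|²` and `|x - η|²` (`integrand_identity`). These are
quadratic functions with `D` isotropic and `N` orthogonal to `D`, since this holds before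
pulling back. As `D > 0` on the ball, `D = γ (1 - 2⟪p, x⟫ + |p|²|x|²)` with `|p| ≤ 1`.

The mean value property of such an `N D ^ (-n / 2)` (`IsRotInv.mean_value`) uses only the rotation
invariance of `σ`. Splitting `N` along `p` and orthogonally to it leaves the mean of the Poisson
kernel and the mean of `(⟪e, ζ⟫ - x)(1 - 2x⟪e, ζ⟫ + x²) ^ (-n / 2)`, with `e` the direction of `p`
and `x = r|p|`. Infinitesimal rotation invariance (`IsRotInv.parts`) gives a differential equation
in `x` that forces the second mean to vanish (`IsRotInv.psi_eq_zero`), whence the first one equals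
`1` (`IsRotInv.poisson_eq_one`).
-/

open MeasureTheory Metric Set Filter
open scoped ENNReal NNReal Topology InnerProductSpace Classical

/-! ### Rotation-invariant probability measures on the sphere -/

/-- A probability measure carried by the unit sphere and invariant under all linear isometries. -/
structure IsRotInv {n : ℕ} (σ : Measure (Eucl n)) : Prop where
  prob : IsProbabilityMeasure σ
  supp : ∀ᵐ ζ ∂σ, ‖ζ‖ = 1
  inv : ∀ R : Eucl n ≃ₗᵢ[ℝ] Eucl n, MeasurePreserving R σ σ

lemma IsRotInv.integral_comp {n : ℕ} {σ : Measure (Eucl n)} (hσ : IsRotInv σ)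
    (R : Eucl n ≃ₗᵢ[ℝ] Eucl n) (f : Eucl n → ℝ) : ∫ ζ, f (R ζ) ∂σ = ∫ ζ, f ζ ∂σ :=
  (hσ.inv R).integral_comp R.toHomeomorph.measurableEmbedding f

lemma abs_inner_le_one {n : ℕ} {e ζ : Eucl n} (he : ‖e‖ = 1) (hζ : ‖ζ‖ = 1) :
    ⟪e, ζ⟫_ℝ ∈ Icc (-1 : ℝ) 1 := by
  have := abs_real_inner_le_norm e ζ
  rw [he, hζ, mul_one] at this
  exact abs_le.1 this

/-- Differentiation under the integral sign, in the form used throughout: the derivative only has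
to be bounded on the unit sphere, locally uniformly in the parameter. -/
lemma IsRotInv.hasDerivAt_integral {n : ℕ} {σ : Measure (Eucl n)} (hσ : IsRotInv σ)
    {F F' : ℝ → Eucl n → ℝ} {x₀ : ℝ} {s : Set ℝ} (hs : s ∈ 𝓝 x₀) (C C₀ : ℝ)
    (hFm : ∀ x, Measurable (F x)) (hFm' : ∀ x, Measurable (F' x))
    (hF₀ : ∀ ζ, ‖ζ‖ = 1 → |F x₀ ζ| ≤ C₀)
    (hC : ∀ ζ, ‖ζ‖ = 1 → ∀ x ∈ s, |F' x ζ| ≤ C)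
    (hd : ∀ ζ, ‖ζ‖ = 1 → ∀ x ∈ s, HasDerivAt (fun x => F x ζ) (F' x ζ) x) :
    HasDerivAt (fun x => ∫ ζ, F x ζ ∂σ) (∫ ζ, F' x₀ ζ ∂σ) x₀ := by
  have := hσ.prob
  refine (hasDerivAt_integral_of_dominated_loc_of_deriv_le (bound := fun _ => C) hs
    (Eventually.of_forall fun x => (hFm x).aestronglyMeasurable) ?_
    (hFm' x₀).aestronglyMeasurable ?_ (integrable_const C) ?_).2
  · exact Integrable.of_bound (hFm x₀).aestronglyMeasurable C₀
      (hσ.supp.mono fun ζ hζ => hF₀ ζ hζ)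
  · exact hσ.supp.mono fun ζ hζ => hC ζ hζ
  · exact hσ.supp.mono fun ζ hζ => hd ζ hζ

/-- The rotation by the angle `θ` in the plane spanned by the orthonormal pair `e`, `v`. -/
noncomputable def planeRot {n : ℕ} (e v : Eucl n) (θ : ℝ) : Eucl n →ₗ[ℝ] Eucl n where
  toFun x := x + ((Real.cos θ - 1) * ⟪e, x⟫_ℝ - Real.sin θ * ⟪v, x⟫_ℝ) • e
    + (Real.sin θ * ⟪e, x⟫_ℝ + (Real.cos θ - 1) * ⟪v, x⟫_ℝ) • v
  map_add' x y := by simp only [inner_add_right]; module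
  map_smul' c x := by simp only [inner_smul_right, RingHom.id_apply]; module

lemma planeRot_inner {n : ℕ} {e v : Eucl n} (he : ‖e‖ = 1) (hv : ‖v‖ = 1)
    (hev : ⟪e, v⟫_ℝ = 0) (θ : ℝ) (x : Eucl n) :
    ⟪e, planeRot e v θ x⟫_ℝ = Real.cos θ * ⟪e, x⟫_ℝ - Real.sin θ * ⟪v, x⟫_ℝ ∧
    ⟪v, planeRot e v θ x⟫_ℝ = Real.sin θ * ⟪e, x⟫_ℝ + Real.cos θ * ⟪v, x⟫_ℝ := by
  have hve : ⟪v, e⟫_ℝ = 0 := by rw [real_inner_comm]; exact hev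
  constructor <;>
  · simp only [planeRot, LinearMap.coe_mk, AddHom.coe_mk, inner_add_right, inner_smul_right, hev,
      hve, real_inner_self_eq_norm_sq, he, hv]
    ring

lemma planeRot_norm {n : ℕ} {e v : Eucl n} (he : ‖e‖ = 1) (hv : ‖v‖ = 1)
    (hev : ⟪e, v⟫_ℝ = 0) (θ : ℝ) (x : Eucl n) : ‖planeRot e v θ x‖ = ‖x‖ := by
  have hve : ⟪v, e⟫_ℝ = 0 := by rw [real_inner_comm]; exact hev
  rw [← sq_eq_sq₀ (norm_nonneg _) (norm_nonneg _), ← real_inner_self_eq_norm_sq,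
    ← real_inner_self_eq_norm_sq]
  simp only [planeRot, LinearMap.coe_mk, AddHom.coe_mk, inner_add_right, inner_add_left,
    inner_smul_right, inner_smul_left, hev, hve, real_inner_self_eq_norm_sq, he, hv,
    real_inner_comm e x, real_inner_comm v x, RCLike.conj_to_real]
  linear_combination (⟪e, x⟫_ℝ ^ 2 + ⟪v, x⟫_ℝ ^ 2) * Real.sin_sq_add_cos_sq θ

/-- Infinitesimal rotation invariance in the plane of `e`, `v`, tested on the function
`⟪v, ζ⟫ u(⟪e, ζ⟫)`. -/
lemma IsRotInv.rot_identity {n : ℕ} {σ : Measure (Eucl n)} (hσ : IsRotInv σ)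
    {e v : Eucl n} (he : ‖e‖ = 1) (hv : ‖v‖ = 1) (hev : ⟪e, v⟫_ℝ = 0) {u u' : ℝ → ℝ}
    (hu : ∀ t ∈ Icc (-1 : ℝ) 1, HasDerivAt u (u' t) t) (hu' : ContinuousOn u' (Icc (-1 : ℝ) 1))
    (hum : Measurable u) (hum' : Measurable u') :
    ∫ ζ, (⟪e, ζ⟫_ℝ * u ⟪e, ζ⟫_ℝ - ⟪v, ζ⟫_ℝ ^ 2 * u' ⟪e, ζ⟫_ℝ) ∂σ = 0 := by
  obtain ⟨C, hC⟩ := isCompact_Icc.exists_bound_of_continuousOn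
    (f := u) (s := Icc (-1 : ℝ) 1) fun t ht => (hu t ht).continuousAt.continuousWithinAt
  obtain ⟨C', hC'⟩ := isCompact_Icc.exists_bound_of_continuousOn hu'
  simp only [Real.norm_eq_abs] at hC hC'
  obtain ⟨τ, hτ⟩ : ∃ τ : ℝ → Eucl n → ℝ, ∀ θ ζ, τ θ ζ =
    Real.cos θ * ⟪e, ζ⟫_ℝ - Real.sin θ * ⟪v, ζ⟫_ℝ := ⟨_, fun _ _ => rfl⟩
  obtain ⟨ν, hν⟩ : ∃ ν : ℝ → Eucl n → ℝ, ∀ θ ζ, ν θ ζ =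
    Real.sin θ * ⟪e, ζ⟫_ℝ + Real.cos θ * ⟪v, ζ⟫_ℝ := ⟨_, fun _ _ => rfl⟩
  have hτm : ∀ θ, Measurable (τ θ) := fun θ => by rw [funext (hτ θ)]; fun_prop
  have hνm : ∀ θ, Measurable (ν θ) := fun θ => by rw [funext (hν θ)]; fun_prop
  have hτb : ∀ θ ζ, ‖ζ‖ = 1 → τ θ ζ ∈ Icc (-1 : ℝ) 1 := fun θ ζ hζ => by
    rw [hτ, ← (planeRot_inner he hv hev θ ζ).1]
    exact abs_inner_le_one he ((planeRot_norm he hv hev θ ζ).trans hζ)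
  have hνb : ∀ θ ζ, ‖ζ‖ = 1 → ν θ ζ ∈ Icc (-1 : ℝ) 1 := fun θ ζ hζ => by
    rw [hν, ← (planeRot_inner he hv hev θ ζ).2]
    exact abs_inner_le_one hv ((planeRot_norm he hv hev θ ζ).trans hζ)
  have key := hσ.hasDerivAt_integral (F := fun θ ζ => ν θ ζ * u (τ θ ζ))
    (F' := fun θ ζ => τ θ ζ * u (τ θ ζ) - ν θ ζ ^ 2 * u' (τ θ ζ)) (x₀ := 0) univ_mem
    (C + C') C
    (fun θ => (hνm θ).mul (hum.comp (hτm θ)))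
    (fun θ => ((hτm θ).mul (hum.comp (hτm θ))).sub (((hνm θ).pow_const 2).mul (hum'.comp (hτm θ))))
    (fun ζ hζ => by
      rw [abs_mul]
      calc _ ≤ 1 * C := mul_le_mul (abs_le.2 (hνb 0 ζ hζ)) (hC _ (hτb 0 ζ hζ)) (abs_nonneg _)
              zero_le_one
        _ = C := one_mul C)
    (fun ζ hζ θ _ => by
      refine (abs_sub _ _).trans ?_
      rw [abs_mul, abs_mul, abs_pow]
      have h1 := abs_le.2 (hτb θ ζ hζ)
      have h2 : |ν θ ζ| ^ 2 ≤ 1 := pow_le_one₀ (abs_nonneg _) (abs_le.2 (hνb θ ζ hζ))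
      have h3 := mul_le_mul h1 (hC _ (hτb θ ζ hζ)) (abs_nonneg _) zero_le_one
      have h4 := mul_le_mul h2 (hC' _ (hτb θ ζ hζ)) (abs_nonneg _) zero_le_one
      linarith)
    (fun ζ hζ θ _ => by
      have h1 : HasDerivAt (fun θ => τ θ ζ) (-ν θ ζ) θ := by
        simp only [hτ]
        exact (((Real.hasDerivAt_cos θ).mul_const ⟪e, ζ⟫_ℝ).sub
          ((Real.hasDerivAt_sin θ).mul_const ⟪v, ζ⟫_ℝ)).congr_deriv (by rw [hν]; ring)
      have h2 : HasDerivAt (fun θ => ν θ ζ) (τ θ ζ) θ := by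
        simp only [hν]
        exact (((Real.hasDerivAt_sin θ).mul_const ⟪e, ζ⟫_ℝ).add
          ((Real.hasDerivAt_cos θ).mul_const ⟪v, ζ⟫_ℝ)).congr_deriv (by rw [hτ]; ring)
      exact (h2.mul ((hu _ (hτb θ ζ hζ)).comp θ h1)).congr_deriv
        (by simp only [Function.comp_apply]; ring))
  -- By invariance the integral does not depend on the angle.
  have hconst : (fun θ => ∫ ζ, ν θ ζ * u (τ θ ζ) ∂σ)
      = fun _ => ∫ ζ, ⟪v, ζ⟫_ℝ * u ⟪e, ζ⟫_ℝ ∂σ := by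
    funext θ
    let R : Eucl n →ₗᵢ[ℝ] Eucl n := ⟨planeRot e v θ, planeRot_norm he hv hev θ⟩
    rw [← hσ.integral_comp (R.toLinearIsometryEquiv rfl) fun ζ => ⟪v, ζ⟫_ℝ * u ⟪e, ζ⟫_ℝ]
    refine integral_congr_ae (Eventually.of_forall fun ζ => ?_)
    have h : R.toLinearIsometryEquiv rfl ζ = planeRot e v θ ζ := rfl
    simp only [h, (planeRot_inner he hv hev θ ζ).1, (planeRot_inner he hv hev θ ζ).2, hτ, hν]
  rw [hconst] at key
  have := key.unique (hasDerivAt_const _ _)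
  simpa [hτ, hν] using this

/-- Summing `IsRotInv.rot_identity` over an orthonormal basis of `e^⊥` gives the integration by
parts formula for the distribution of `⟪e, ζ⟫`, whose density is proportional to
`(1 - t ^ 2) ^ ((n - 3) / 2)`. -/
lemma IsRotInv.parts {n : ℕ} {σ : Measure (Eucl n)} (hσ : IsRotInv σ)
    {e : Eucl n} (he : ‖e‖ = 1) {u u' : ℝ → ℝ}
    (hu : ∀ t ∈ Icc (-1 : ℝ) 1, HasDerivAt u (u' t) t) (hu' : ContinuousOn u' (Icc (-1 : ℝ) 1))
    (hum : Measurable u) (hum' : Measurable u') :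
    ∫ ζ, (((n : ℝ) - 1) * ⟪e, ζ⟫_ℝ * u ⟪e, ζ⟫_ℝ - (1 - ⟪e, ζ⟫_ℝ ^ 2) * u' ⟪e, ζ⟫_ℝ) ∂σ = 0 := by
  have := hσ.prob
  have hn : 0 < n := by
    rcases Nat.eq_zero_or_pos n with rfl | h
    · exact absurd he (by rw [Subsingleton.elim e 0]; simp)
    · exact h
  let i₀ : Fin n := ⟨0, hn⟩
  obtain ⟨b, hb⟩ := Orthonormal.exists_orthonormalBasis_extension_of_card_eq (𝕜 := ℝ)
    (E := Eucl n) (ι := Fin n) (by simp) (v := fun _ => e) (s := {i₀}) (by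
      constructor
      · intro i; simpa using he
      · intro i j hij; exact absurd (Subsingleton.elim i j) hij)
  have hb0 : b i₀ = e := hb i₀ rfl
  obtain ⟨C, hC⟩ := isCompact_Icc.exists_bound_of_continuousOn
    (f := u) (s := Icc (-1 : ℝ) 1) fun t ht => (hu t ht).continuousAt.continuousWithinAt
  obtain ⟨C', hC'⟩ := isCompact_Icc.exists_bound_of_continuousOn hu'
  simp only [Real.norm_eq_abs] at hC hC'
  have hterm : ∀ i ∈ Finset.univ.erase i₀,
      ∫ ζ, (⟪e, ζ⟫_ℝ * u ⟪e, ζ⟫_ℝ - ⟪b i, ζ⟫_ℝ ^ 2 * u' ⟪e, ζ⟫_ℝ) ∂σ = 0 := by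
    intro i hi
    refine hσ.rot_identity he (b.norm_eq_one i) ?_ hu hu' hum hum'
    rw [← hb0]
    exact b.inner_eq_zero (Finset.ne_of_mem_erase hi).symm
  have hsum := Finset.sum_eq_zero hterm
  rw [← integral_finsetSum] at hsum
  · rw [← hsum]
    refine integral_congr_ae (hσ.supp.mono fun ζ hζ => ?_)
    have h1 : ∑ i, ⟪b i, ζ⟫_ℝ ^ 2 = 1 := by
      have := b.sum_sq_norm_inner_right ζ
      simpa [hζ] using this
    rw [← Finset.add_sum_erase _ _ (Finset.mem_univ i₀), hb0] at h1
    simp only [Finset.sum_sub_distrib, ← Finset.sum_mul, Finset.sum_const,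
      Finset.card_erase_of_mem (Finset.mem_univ i₀), Finset.card_univ, Fintype.card_fin,
      nsmul_eq_mul, Nat.cast_pred hn]
    linear_combination u' ⟪e, ζ⟫_ℝ * h1
  · intro i _
    have hm : Measurable fun ζ : Eucl n => ⟪e, ζ⟫_ℝ := by fun_prop
    have hmi : Measurable fun ζ : Eucl n => ⟪b i, ζ⟫_ℝ := by fun_prop
    refine Integrable.of_bound ((hm.mul (hum.comp hm)).sub
      ((hmi.pow_const 2).mul (hum'.comp hm))).aestronglyMeasurable (C + C')
      (hσ.supp.mono fun ζ hζ => ?_)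
    have h1 := abs_inner_le_one he hζ
    refine (abs_sub _ _).trans ?_
    rw [abs_mul, abs_mul, abs_pow]
    have h2 : |⟪b i, ζ⟫_ℝ| ^ 2 ≤ 1 :=
      pow_le_one₀ (abs_nonneg _) (abs_le.2 (abs_inner_le_one (b.norm_eq_one i) hζ))
    have h3 := mul_le_mul (abs_le.2 h1) (hC _ h1) (abs_nonneg _) zero_le_one
    have h4 := mul_le_mul h2 (hC' _ h1) (abs_nonneg _) zero_le_one
    linarith

/-! ### The zonal integrals behind the mean value property -/

lemma zonal_pos {x t : ℝ} (hx : x ∈ Ioo (-1 : ℝ) 1) (ht : t ∈ Icc (-1 : ℝ) 1) :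
    0 < 1 - 2 * x * t + x ^ 2 := by
  obtain ⟨h1, h2⟩ := hx
  obtain ⟨h3, h4⟩ := ht
  -- `1 - 2xt + x²` is the average of `(1 - x)²` and `(1 + x)²` with weights `(1 ± t) / 2`.
  nlinarith [mul_nonneg (sub_nonneg.2 h4) (sq_nonneg (1 + x)),
    mul_nonneg (by linarith : (0 : ℝ) ≤ 1 + t) (sq_nonneg (1 - x)),
    mul_pos (sub_pos.2 h2) (by linarith : (0 : ℝ) < 1 + x), sq_nonneg x, sq_nonneg (1 - x)]

/-- Differentiation under the integral sign for functions of `⟪e, ζ⟫`, where joint continuity of the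
derivative replaces the explicit bounds. -/
lemma IsRotInv.hasDerivAt_zonal {n : ℕ} {σ : Measure (Eucl n)} (hσ : IsRotInv σ)
    {e : Eucl n} (he : ‖e‖ = 1) {F F' : ℝ → ℝ → ℝ}
    (hFm : ∀ x, Measurable (F x)) (hFm' : ∀ x, Measurable (F' x))
    (hF : ∀ x ∈ Ioo (-1 : ℝ) 1, ContinuousOn (F x) (Icc (-1 : ℝ) 1))
    (hF' : ContinuousOn (fun p : ℝ × ℝ => F' p.1 p.2) (Ioo (-1 : ℝ) 1 ×ˢ Icc (-1 : ℝ) 1))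
    (hd : ∀ x ∈ Ioo (-1 : ℝ) 1, ∀ t ∈ Icc (-1 : ℝ) 1, HasDerivAt (fun x => F x t) (F' x t) x)
    {x₀ : ℝ} (hx₀ : x₀ ∈ Ioo (-1 : ℝ) 1) :
    HasDerivAt (fun x => ∫ ζ, F x ⟪e, ζ⟫_ℝ ∂σ) (∫ ζ, F' x₀ ⟪e, ζ⟫_ℝ ∂σ) x₀ := by
  obtain ⟨a, ha1, ha2⟩ := exists_between hx₀.1
  obtain ⟨b, hb1, hb2⟩ := exists_between hx₀.2
  have hsub : Icc a b ⊆ Ioo (-1 : ℝ) 1 := fun y hy => ⟨ha1.trans_le hy.1, hy.2.trans_lt hb2⟩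
  obtain ⟨C₀, hC₀⟩ := isCompact_Icc.exists_bound_of_continuousOn (hF x₀ hx₀)
  obtain ⟨C, hC⟩ := (isCompact_Icc.prod isCompact_Icc).exists_bound_of_continuousOn
    (hF'.mono (prod_mono hsub Subset.rfl))
  have hm : Measurable fun ζ : Eucl n => ⟪e, ζ⟫_ℝ := by fun_prop
  refine hσ.hasDerivAt_integral (F := fun x ζ => F x ⟪e, ζ⟫_ℝ) (F' := fun x ζ => F' x ⟪e, ζ⟫_ℝ)
    (Icc_mem_nhds ha2 hb1) C C₀
    (fun x => (hFm x).comp hm) (fun x => (hFm' x).comp hm)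
    (fun ζ hζ => hC₀ _ (abs_inner_le_one he hζ))
    (fun ζ hζ x hx => hC (x, ⟪e, ζ⟫_ℝ) ⟨hx, abs_inner_le_one he hζ⟩)
    (fun ζ hζ x hx => hd x (hsub hx) _ (abs_inner_le_one he hζ))

lemma zonal_continuousOn (a : ℝ) : ContinuousOn
    (fun p : ℝ × ℝ => (1 - 2 * p.1 * p.2 + p.1 ^ 2) ^ a) (Ioo (-1 : ℝ) 1 ×ˢ Icc (-1 : ℝ) 1) := by
  intro p hp
  refine ContinuousAt.continuousWithinAt (ContinuousAt.rpow_const (by fun_prop) (Or.inl ?_))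
  exact (zonal_pos hp.1 hp.2).ne'

lemma zonal_continuousOn' (a : ℝ) {x : ℝ} (hx : x ∈ Ioo (-1 : ℝ) 1) : ContinuousOn
    (fun t : ℝ => (1 - 2 * x * t + x ^ 2) ^ a) (Icc (-1 : ℝ) 1) :=
  (zonal_continuousOn a).comp (f := fun t => (x, t)) (by fun_prop) fun _ ht => ⟨hx, ht⟩

lemma IsRotInv.integrable_zonal {n : ℕ} {σ : Measure (Eucl n)} (hσ : IsRotInv σ)
    {e : Eucl n} (he : ‖e‖ = 1) {f : ℝ → ℝ} (hfm : Measurable f)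
    (hf : ContinuousOn f (Icc (-1 : ℝ) 1)) : Integrable (fun ζ => f ⟪e, ζ⟫_ℝ) σ := by
  have := hσ.prob
  obtain ⟨C, hC⟩ := isCompact_Icc.exists_bound_of_continuousOn hf
  have hm : Measurable fun ζ : Eucl n => ⟪e, ζ⟫_ℝ := by fun_prop
  exact Integrable.of_bound (hfm.comp hm).aestronglyMeasurable C
    (hσ.supp.mono fun ζ hζ => hC _ (abs_inner_le_one he hζ))

/-- The radial derivative of the Newtonian potential has mean zero over the sphere: writing the
integral as `ψ x`, the integration by parts formula gives `x ψ' = -(n - 1) ψ`, so that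
`x ^ (n - 1) ψ` is constant. -/
lemma IsRotInv.psi_eq_zero {n : ℕ} (hn : 3 ≤ n) {σ : Measure (Eucl n)} (hσ : IsRotInv σ)
    {e : Eucl n} (he : ‖e‖ = 1) {x : ℝ} (hx : x ∈ Ioo (-1 : ℝ) 1) :
    ∫ ζ, (⟪e, ζ⟫_ℝ - x) * (1 - 2 * x * ⟪e, ζ⟫_ℝ + x ^ 2) ^ (-(n : ℝ) / 2) ∂σ = 0 := by
  set ψ : ℝ → ℝ := fun x =>
    ∫ ζ, (⟪e, ζ⟫_ℝ - x) * (1 - 2 * x * ⟪e, ζ⟫_ℝ + x ^ 2) ^ (-(n : ℝ) / 2) ∂σ with hψ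
  have hψd : ∀ y ∈ Ioo (-1 : ℝ) 1, HasDerivAt ψ (∫ ζ,
      (n * (⟪e, ζ⟫_ℝ - y) ^ 2 * (1 - 2 * y * ⟪e, ζ⟫_ℝ + y ^ 2) ^ (-(n : ℝ) / 2 - 1)
        - (1 - 2 * y * ⟪e, ζ⟫_ℝ + y ^ 2) ^ (-(n : ℝ) / 2)) ∂σ) y := by
    intro y hy
    refine hσ.hasDerivAt_zonal he (F := fun y t => (t - y) * (1 - 2 * y * t + y ^ 2) ^ (-(n : ℝ) / 2))
      (F' := fun y t => n * (t - y) ^ 2 * (1 - 2 * y * t + y ^ 2) ^ (-(n : ℝ) / 2 - 1)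
        - (1 - 2 * y * t + y ^ 2) ^ (-(n : ℝ) / 2)) (fun x => by fun_prop) (fun x => by fun_prop)
      (fun x hx => ContinuousOn.mul (by fun_prop) (zonal_continuousOn' _ hx))
      (ContinuousOn.sub (ContinuousOn.mul (by fun_prop) (zonal_continuousOn _))
        (zonal_continuousOn _)) ?_ hy
    intro x hx t ht
    have hd : HasDerivAt (fun x : ℝ => 1 - 2 * x * t + x ^ 2) (2 * x - 2 * t) x := by
      have h1 := (((hasDerivAt_id x).const_mul 2).mul_const t).const_sub 1
      exact (h1.add (hasDerivAt_pow 2 x)).congr_deriv (by push_cast; ring)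
    have h2 : HasDerivAt (fun x : ℝ => t - x) (-1) x := by
      simpa using (hasDerivAt_id x).const_sub t
    exact (h2.mul (hd.rpow_const (p := -(n : ℝ) / 2)
      (Or.inl (zonal_pos hx ht).ne'))).congr_deriv (by ring)
  have hode : ∀ y ∈ Ioo (-1 : ℝ) 1, y * (∫ ζ,
      (n * (⟪e, ζ⟫_ℝ - y) ^ 2 * (1 - 2 * y * ⟪e, ζ⟫_ℝ + y ^ 2) ^ (-(n : ℝ) / 2 - 1)
        - (1 - 2 * y * ⟪e, ζ⟫_ℝ + y ^ 2) ^ (-(n : ℝ) / 2)) ∂σ) + (n - 1) * ψ y = 0 := by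
    intro y hy
    have hparts := hσ.parts he (u := fun t => (1 - 2 * y * t + y ^ 2) ^ (-(n : ℝ) / 2))
      (u' := fun t => n * y * (1 - 2 * y * t + y ^ 2) ^ (-(n : ℝ) / 2 - 1))
      (fun t ht => by
        have hd : HasDerivAt (fun t : ℝ => 1 - 2 * y * t + y ^ 2) (-(2 * y)) t := by
          have h1 := (((hasDerivAt_id t).const_mul (2 * y)).const_sub 1).add_const (y ^ 2)
          exact h1.congr_deriv (by ring)
        exact (hd.rpow_const (p := -(n : ℝ) / 2)
          (Or.inl (zonal_pos hy ht).ne')).congr_deriv (by ring))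
      (ContinuousOn.mul (by fun_prop) (zonal_continuousOn' _ hy)) (by fun_prop) (by fun_prop)
    rw [← hparts, hψ, ← integral_const_mul, ← integral_const_mul, ← integral_add]
    · refine integral_congr_ae (hσ.supp.mono fun ζ hζ => ?_)
      have hpos := zonal_pos hy (abs_inner_le_one he hζ)
      have hsplit : (1 - 2 * y * ⟪e, ζ⟫_ℝ + y ^ 2) ^ (-(n : ℝ) / 2) =
          (1 - 2 * y * ⟪e, ζ⟫_ℝ + y ^ 2) ^ (-(n : ℝ) / 2 - 1) *
            (1 - 2 * y * ⟪e, ζ⟫_ℝ + y ^ 2) := by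
        rw [Real.rpow_sub_one hpos.ne', div_mul_cancel₀ _ hpos.ne']
      simp only []
      rw [hsplit]
      ring
    · exact hσ.integrable_zonal he (f := fun t => y * (n * (t - y) ^ 2 *
        (1 - 2 * y * t + y ^ 2) ^ (-(n : ℝ) / 2 - 1) - (1 - 2 * y * t + y ^ 2) ^ (-(n : ℝ) / 2)))
        (by fun_prop) (ContinuousOn.mul (by fun_prop) (ContinuousOn.sub (ContinuousOn.mul
          (by fun_prop) (zonal_continuousOn' _ hy)) (zonal_continuousOn' _ hy)))
    · exact hσ.integrable_zonal he (f := fun t => ((n : ℝ) - 1) * ((t - y) *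
        (1 - 2 * y * t + y ^ 2) ^ (-(n : ℝ) / 2))) (by fun_prop)
        (ContinuousOn.mul (by fun_prop) (ContinuousOn.mul (by fun_prop)
          (zonal_continuousOn' _ hy)))
  obtain ⟨m, rfl⟩ : ∃ m, n = m + 2 := ⟨n - 2, by omega⟩
  have hd : ∀ y ∈ Ioo (-1 : ℝ) 1, HasDerivAt (fun y => y ^ (m + 1) * ψ y) 0 y := by
    intro y hy
    refine ((hasDerivAt_pow (m + 1) y).mul (hψd y hy)).congr_deriv ?_
    have := hode y hy
    rw [Nat.add_sub_cancel, pow_succ y m]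
    push_cast at this ⊢
    linear_combination y ^ m * this
  have hconst : ∀ y ∈ Ioo (-1 : ℝ) 1, y ^ (m + 1) * ψ y = 0 := by
    intro y hy
    have := isOpen_Ioo.is_const_of_deriv_eq_zero isPreconnected_Ioo
      (fun z hz => (hd z hz).differentiableAt.differentiableWithinAt)
      (fun z hz => (hd z hz).deriv) hy (y := 0) (by norm_num)
    simpa using this
  rcases eq_or_ne x 0 with rfl | hx0
  · have := hode 0 hx
    rw [zero_mul, zero_add] at this
    refine (mul_eq_zero.1 this).resolve_left ?_
    push_cast
    have hm : (0 : ℝ) ≤ m := m.cast_nonneg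
    exact ne_of_gt (by linarith)
  · exact (mul_eq_zero.1 (hconst x hx)).resolve_left (pow_ne_zero _ hx0)

/-- Normalization of the Poisson kernel, obtained from the constancy of the mean of the Newtonian
potential `(1 - 2xt + x²)^(1 - n/2)`. -/
lemma IsRotInv.poisson_eq_one {n : ℕ} (hn : 3 ≤ n) {σ : Measure (Eucl n)} (hσ : IsRotInv σ)
    {e : Eucl n} (he : ‖e‖ = 1) {x : ℝ} (hx : x ∈ Ioo (-1 : ℝ) 1) :
    ∫ ζ, (1 - x ^ 2) * (1 - 2 * x * ⟪e, ζ⟫_ℝ + x ^ 2) ^ (-(n : ℝ) / 2) ∂σ = 1 := by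
  have := hσ.prob
  have hAd : ∀ y ∈ Ioo (-1 : ℝ) 1, HasDerivAt
      (fun y => ∫ ζ, (1 - 2 * y * ⟪e, ζ⟫_ℝ + y ^ 2) ^ (-(n : ℝ) / 2 + 1) ∂σ) 0 y := by
    intro y hy
    refine (hσ.hasDerivAt_zonal he (F := fun y t => (1 - 2 * y * t + y ^ 2) ^ (-(n : ℝ) / 2 + 1))
      (F' := fun y t => ((n : ℝ) - 2) * ((t - y) * (1 - 2 * y * t + y ^ 2) ^ (-(n : ℝ) / 2)))
      (fun x => by fun_prop) (fun x => by fun_prop)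
      (fun x hx => zonal_continuousOn' _ hx)
      (ContinuousOn.mul (by fun_prop) (ContinuousOn.mul (by fun_prop) (zonal_continuousOn _)))
      ?_ hy).congr_deriv ?_
    · intro x hx t ht
      have hd : HasDerivAt (fun x : ℝ => 1 - 2 * x * t + x ^ 2) (2 * x - 2 * t) x := by
        have h1 := (((hasDerivAt_id x).const_mul 2).mul_const t).const_sub 1
        exact (h1.add (hasDerivAt_pow 2 x)).congr_deriv (by push_cast; ring)
      refine (hd.rpow_const (p := -(n : ℝ) / 2 + 1)
        (Or.inl (zonal_pos hx ht).ne')).congr_deriv ?_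
      rw [add_sub_cancel_right]
      ring
    · rw [integral_const_mul, hσ.psi_eq_zero hn he hy, mul_zero]
  have hA : ∫ ζ, (1 - 2 * x * ⟪e, ζ⟫_ℝ + x ^ 2) ^ (-(n : ℝ) / 2 + 1) ∂σ = 1 := by
    have := isOpen_Ioo.is_const_of_deriv_eq_zero isPreconnected_Ioo
      (fun z hz => (hAd z hz).differentiableAt.differentiableWithinAt)
      (fun z hz => (hAd z hz).deriv) hx (y := 0) (by norm_num)
    simpa using this
  have hψ := hσ.psi_eq_zero hn he hx
  calc _ = ∫ ζ, ((1 - 2 * x * ⟪e, ζ⟫_ℝ + x ^ 2) ^ (-(n : ℝ) / 2 + 1) + 2 * x * ((⟪e, ζ⟫_ℝ - x) *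
        (1 - 2 * x * ⟪e, ζ⟫_ℝ + x ^ 2) ^ (-(n : ℝ) / 2))) ∂σ := by
        refine integral_congr_ae (hσ.supp.mono fun ζ hζ => ?_)
        simp only []
        rw [Real.rpow_add_one (zonal_pos hx (abs_inner_le_one he hζ)).ne']
        ring
    _ = 1 := by
        rw [integral_add, integral_const_mul, hψ, hA, mul_zero, add_zero]
        · exact hσ.integrable_zonal he (f := fun t => (1 - 2 * x * t + x ^ 2) ^ (-(n : ℝ) / 2 + 1))
            (by fun_prop) (zonal_continuousOn' _ hx)
        · exact hσ.integrable_zonal he (f := fun t => 2 * x * ((t - x) *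
            (1 - 2 * x * t + x ^ 2) ^ (-(n : ℝ) / 2))) (by fun_prop)
            (ContinuousOn.mul (by fun_prop) (ContinuousOn.mul (by fun_prop)
              (zonal_continuousOn' _ hx)))

/-- The mean value property on the sphere of radius `r`, centred at the origin, for the harmonic
function `N D ^ (-n / 2)`, where `D x = 1 - 2⟪p, x⟫ + |p|²|x|²` and
`N x = α|x|² + ⟪β, x⟫ + γ` is Lorentz-orthogonal to `D`, i.e. `α = -(⟪β, p⟫ + |p|²γ)`. -/
lemma IsRotInv.mean_value {n : ℕ} (hn : 3 ≤ n) {σ : Measure (Eucl n)} (hσ : IsRotInv σ)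
    {p : Eucl n} (hp : ‖p‖ ≤ 1) (β : Eucl n) (γ : ℝ) {r : ℝ} (hr : r ∈ Ico (0 : ℝ) 1) :
    ∫ ζ, (-(⟪β, p⟫_ℝ + ‖p‖ ^ 2 * γ) * r ^ 2 + r * ⟪β, ζ⟫_ℝ + γ) *
      (1 - 2 * r * ⟪p, ζ⟫_ℝ + ‖p‖ ^ 2 * r ^ 2) ^ (-(n : ℝ) / 2) ∂σ = γ := by
  have := hσ.prob
  obtain ⟨e, he, hpe⟩ : ∃ e : Eucl n, ‖e‖ = 1 ∧ p = ‖p‖ • e := by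
    rcases eq_or_ne p 0 with rfl | hp0
    · exact ⟨EuclideanSpace.single ⟨0, by omega⟩ 1, by simp, by simp⟩
    · refine ⟨‖p‖⁻¹ • p, ?_, ?_⟩
      · rw [norm_smul, norm_inv, norm_norm, inv_mul_cancel₀ (norm_ne_zero_iff.2 hp0)]
      · rw [smul_inv_smul₀ (norm_ne_zero_iff.2 hp0)]
  obtain ⟨ρ, hρ⟩ : ∃ ρ, ρ = ‖p‖ := ⟨_, rfl⟩
  have hρ0 : 0 ≤ ρ := hρ ▸ norm_nonneg p
  rw [← hρ] at hpe hp ⊢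
  have hx : r * ρ ∈ Ioo (-1 : ℝ) 1 := by
    constructor
    · linarith [mul_nonneg hr.1 hρ0]
    · calc r * ρ ≤ r * 1 := mul_le_mul_of_nonneg_left hp hr.1
        _ < 1 := by linarith [hr.2]
  obtain ⟨w, hw⟩ : ∃ w, w = β - ⟪e, β⟫_ℝ • e := ⟨_, rfl⟩
  have hwe : ⟪w, e⟫_ℝ = 0 := by
    rw [hw, inner_sub_left, inner_smul_left, real_inner_self_eq_norm_sq, he, real_inner_comm β e]
    simp
  have hmt : Measurable fun ζ : Eucl n => ⟪e, ζ⟫_ℝ := by fun_prop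
  have hmw : Measurable fun ζ : Eucl n => ⟪w, ζ⟫_ℝ := by fun_prop
  -- The component of `β` orthogonal to `p` is removed by the reflection in its hyperplane.
  have hodd : ∫ ζ, ⟪w, ζ⟫_ℝ *
      (1 - 2 * (r * ρ) * ⟪e, ζ⟫_ℝ + (r * ρ) ^ 2) ^ (-(n : ℝ) / 2) ∂σ = 0 := by
    have h := hσ.integral_comp (ℝ ∙ w)ᗮ.reflection fun ζ => ⟪w, ζ⟫_ℝ *
      (1 - 2 * (r * ρ) * ⟪e, ζ⟫_ℝ + (r * ρ) ^ 2) ^ (-(n : ℝ) / 2)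
    have h1 : ∀ ζ, ⟪w, (ℝ ∙ w)ᗮ.reflection ζ⟫_ℝ = -⟪w, ζ⟫_ℝ := fun ζ => by
      rw [← Submodule.reflection_symm, ← LinearIsometryEquiv.inner_map_eq_flip,
        Submodule.reflection_orthogonalComplement_singleton_eq_neg, inner_neg_left]
    have h2 : ∀ ζ, ⟪e, (ℝ ∙ w)ᗮ.reflection ζ⟫_ℝ = ⟪e, ζ⟫_ℝ := fun ζ => by
      rw [← Submodule.reflection_symm, ← LinearIsometryEquiv.inner_map_eq_flip,
        Submodule.reflection_mem_subspace_eq_self (Submodule.mem_orthogonal_singleton_iff_inner_right.2 hwe)]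
    simp only [h1, h2, neg_mul, integral_neg] at h
    linarith
  calc _ = ∫ ζ, (γ * ((1 - (r * ρ) ^ 2) *
          (1 - 2 * (r * ρ) * ⟪e, ζ⟫_ℝ + (r * ρ) ^ 2) ^ (-(n : ℝ) / 2)) +
        r * ⟪e, β⟫_ℝ * ((⟪e, ζ⟫_ℝ - r * ρ) *
          (1 - 2 * (r * ρ) * ⟪e, ζ⟫_ℝ + (r * ρ) ^ 2) ^ (-(n : ℝ) / 2)) +
        r * (⟪w, ζ⟫_ℝ *
          (1 - 2 * (r * ρ) * ⟪e, ζ⟫_ℝ + (r * ρ) ^ 2) ^ (-(n : ℝ) / 2))) ∂σ := by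
        refine integral_congr_ae (Eventually.of_forall fun ζ => ?_)
        simp only [hpe, inner_smul_left, inner_smul_right, hw, inner_sub_left,
          RCLike.conj_to_real, real_inner_comm e β]
        rw [show 1 - 2 * r * (ρ * ⟪e, ζ⟫_ℝ) + ρ ^ 2 * r ^ 2 =
          1 - 2 * (r * ρ) * ⟪e, ζ⟫_ℝ + (r * ρ) ^ 2 by ring]
        ring
    _ = γ := by
        have hi1 := hσ.integrable_zonal he (f := fun t => γ * ((1 - (r * ρ) ^ 2) *
          (1 - 2 * (r * ρ) * t + (r * ρ) ^ 2) ^ (-(n : ℝ) / 2))) (by fun_prop)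
          (ContinuousOn.mul (by fun_prop) (ContinuousOn.mul (by fun_prop)
              (zonal_continuousOn' _ hx)))
        have hi2 := hσ.integrable_zonal he (f := fun t => r * ⟪e, β⟫_ℝ * ((t - r * ρ) *
          (1 - 2 * (r * ρ) * t + (r * ρ) ^ 2) ^ (-(n : ℝ) / 2))) (by fun_prop)
          (ContinuousOn.mul (by fun_prop) (ContinuousOn.mul (by fun_prop)
              (zonal_continuousOn' _ hx)))
        have hi3 : Integrable (fun ζ => r * (⟪w, ζ⟫_ℝ *
          (1 - 2 * (r * ρ) * ⟪e, ζ⟫_ℝ + (r * ρ) ^ 2) ^ (-(n : ℝ) / 2))) σ := by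
          refine Integrable.const_mul ?_ _
          refine Integrable.bdd_mul (c := ‖w‖)
            (hσ.integrable_zonal he (f := fun t =>
              (1 - 2 * (r * ρ) * t + (r * ρ) ^ 2) ^ (-(n : ℝ) / 2)) (by fun_prop)
              (zonal_continuousOn' _ hx)) hmw.aestronglyMeasurable
            (hσ.supp.mono fun ζ hζ => ?_)
          simpa [hζ] using norm_inner_le_norm (𝕜 := ℝ) w ζ
        rw [integral_add ?_ hi3, integral_add hi1 hi2, integral_const_mul,
          hσ.poisson_eq_one hn he hx, integral_const_mul, hσ.psi_eq_zero hn he hx,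
          integral_const_mul, hodd]
        · ring
        · exact hi1.add hi2

/-- The normalized surface measure is a rotation-invariant probability measure. The alternative
`sphMeasure n = 0` only covers the degenerate values `0` and `∞` of the Hausdorff measure of the
sphere; it never occurs, but excluding it is not needed. -/
lemma sphMeasure_eq_zero_or (n : ℕ) : sphMeasure n = 0 ∨ IsRotInv (sphMeasure n) := by
  have hms : MeasurableSet (uSphere n) := isClosed_sphere.measurableSet
  by_cases h0 : Measure.hausdorffMeasure ((n : ℝ) - 1) (uSphere n) = 0
  · left
    rw [sphMeasure, Measure.restrict_eq_zero.2 h0, smul_zero]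
  by_cases ht : Measure.hausdorffMeasure ((n : ℝ) - 1) (uSphere n) = ⊤
  · left
    rw [sphMeasure, ht, ENNReal.inv_top, zero_smul]
  right
  refine ⟨⟨?_⟩, ?_, fun R => ?_⟩
  · simp only [sphMeasure, Measure.smul_apply, Measure.restrict_apply_univ, smul_eq_mul]
    exact ENNReal.inv_mul_cancel h0 ht
  · refine Measure.ae_smul_measure ?_ _
    filter_upwards [ae_restrict_mem hms] with ζ hζ
    simpa [uSphere] using hζ
  · refine MeasurePreserving.smul_measure ?_ _
    have h := (R.toIsometryEquiv.measurePreserving_hausdorffMeasure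
      ((n : ℝ) - 1)).restrict_preimage hms
    have hpre : (R.toIsometryEquiv : Eucl n → Eucl n) ⁻¹' uSphere n = uSphere n := by
      ext ζ; simp [uSphere]
    rw [hpre] at h
    exact h

/-! ### Möbius transformations and the Lorentz form -/

/-- The quadratic function `x ↦ α|x|² + ⟪β, x⟫ + γ` with coefficients `v = (α, β, γ)`, as a
function on `ℝ̂ⁿ`. Its value at `∞` is the leading coefficient `α`. -/
noncomputable def evHat {n : ℕ} (v : ℝ × Eucl n × ℝ) : EuclHat n → ℝ :=
  OnePoint.rec v.1 (fun x => v.1 * ‖x‖ ^ 2 + ⟪v.2.1, x⟫_ℝ + v.2.2)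

lemma evHat_infty {n : ℕ} (v : ℝ × Eucl n × ℝ) : evHat v OnePoint.infty = v.1 := rfl

lemma evHat_coe {n : ℕ} (v : ℝ × Eucl n × ℝ) (x : Eucl n) :
    evHat v ↑x = v.1 * ‖x‖ ^ 2 + ⟪v.2.1, x⟫_ℝ + v.2.2 := rfl

/-- The Lorentz form on quadratic functions; `lor v v` is the discriminant `|β|² - 4αγ`. -/
noncomputable def lor {n : ℕ} (v w : ℝ × Eucl n × ℝ) : ℝ :=
  ⟪v.2.1, w.2.1⟫_ℝ - 2 * v.1 * w.2.2 - 2 * v.2.2 * w.1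

/-- `T` lifts `g` to the space of quadratic functions: it preserves the Lorentz form, and `T v` is
the pull-back `v ∘ g` up to a positive factor depending only on the point. -/
def IsLift {n : ℕ} (g : EuclHat n → EuclHat n) (T : ℝ × Eucl n × ℝ → ℝ × Eucl n × ℝ) : Prop :=
  (∀ v w, lor (T v) (T w) = lor v w) ∧
    ∀ p, ∃ κ : ℝ, 0 < κ ∧ ∀ v, evHat (T v) p = κ * evHat v (g p)

lemma IsLift.comp {n : ℕ} {g h : EuclHat n → EuclHat n}
    {T U : ℝ × Eucl n × ℝ → ℝ × Eucl n × ℝ} (hg : IsLift g T) (hh : IsLift h U) :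
    IsLift (g ∘ h) (U ∘ T) := by
  refine ⟨fun v w => (hh.1 _ _).trans (hg.1 _ _), fun p => ?_⟩
  obtain ⟨k, hk, hk'⟩ := hh.2 p
  obtain ⟨l, hl, hl'⟩ := hg.2 (h p)
  exact ⟨k * l, mul_pos hk hl, fun v => by
    rw [Function.comp_apply, Function.comp_apply, hk', hl', mul_assoc]⟩

/-- The lift of the inversion `g` in the sphere `S(a, r)` sends `v` to `(|x - a|² / r²) (v ∘ g)`. -/
lemma exists_lift_sphereRefl {n : ℕ} (a : Eucl n) {r : ℝ} (hr : 0 < r) :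
    ∃ T, IsLift (sphereRefl n a r) T := by
  refine ⟨fun v => ((v.1 * ‖a‖ ^ 2 + ⟪v.2.1, a⟫_ℝ + v.2.2) / r ^ 2,
    v.2.1 + (2 * v.1) • a - (2 * (v.1 * ‖a‖ ^ 2 + ⟪v.2.1, a⟫_ℝ + v.2.2) / r ^ 2) • a,
    (v.1 * ‖a‖ ^ 2 + ⟪v.2.1, a⟫_ℝ + v.2.2) * ‖a‖ ^ 2 / r ^ 2 - 2 * v.1 * ‖a‖ ^ 2
      + v.1 * r ^ 2 - ⟪v.2.1, a⟫_ℝ), ?_, ?_⟩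
  · intro v w
    simp only [lor, inner_sub_left, inner_sub_right, inner_add_left, inner_add_right,
      inner_smul_left, inner_smul_right, RCLike.conj_to_real, real_inner_self_eq_norm_sq,
      real_inner_comm w.2.1 a]
    field_simp
    ring
  · intro p
    induction p using OnePoint.rec with
    | infty =>
      refine ⟨(r ^ 2)⁻¹, by positivity, fun v => ?_⟩
      change _ = _ * evHat v ↑a
      rw [evHat_infty, evHat_coe]
      ring
    | coe x =>
      by_cases hx : x = a
      · subst hx
        refine ⟨r ^ 2, by positivity, fun v => ?_⟩
        have : sphereRefl n x r ↑x = OnePoint.infty := if_pos rfl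
        rw [this, evHat_infty, evHat_coe]
        simp only [inner_sub_left, inner_add_left, inner_smul_left, RCLike.conj_to_real,
          real_inner_self_eq_norm_sq]
        field_simp
        ring
      · have hxa : 0 < ‖x - a‖ := norm_pos_iff.2 (sub_ne_zero.2 hx)
        refine ⟨‖x - a‖ ^ 2 / r ^ 2, by positivity, fun v => ?_⟩
        have : sphereRefl n a r ↑x = ↑(a + (r ^ 2 / ‖x - a‖ ^ 2) • (x - a)) := if_neg hx
        rw [this, evHat_coe, evHat_coe, norm_add_sq_real, norm_smul, mul_pow, Real.norm_eq_abs,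
          sq_abs]
        simp only [inner_sub_left, inner_add_left, inner_smul_left, inner_smul_right,
          inner_add_right, RCLike.conj_to_real]
        have h1 : ‖x - a‖ ^ 2 = ‖x‖ ^ 2 - 2 * ⟪a, x⟫_ℝ + ‖a‖ ^ 2 := by
          rw [norm_sub_sq_real, real_inner_comm]
        have h2 : ⟪a, x - a⟫_ℝ = ⟪a, x⟫_ℝ - ‖a‖ ^ 2 := by
          rw [inner_sub_right, real_inner_self_eq_norm_sq]
        have h3 : ⟪v.2.1, x - a⟫_ℝ = ⟪v.2.1, x⟫_ℝ - ⟪v.2.1, a⟫_ℝ := inner_sub_right _ _ _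
        rw [h2, h3]
        generalize ‖x - a‖ = d at *
        field_simp
        rw [h1]
        ring

lemma exists_lift_hyperRefl {n : ℕ} {a : Eucl n} (ha : ‖a‖ = 1) (t : ℝ) :
    ∃ T, IsLift (hyperRefl n a t) T := by
  refine ⟨fun v => (v.1, v.2.1 - (4 * t * v.1 + 2 * ⟪v.2.1, a⟫_ℝ) • a,
    v.2.2 + 4 * t ^ 2 * v.1 + 2 * t * ⟪v.2.1, a⟫_ℝ), ?_, ?_⟩
  · intro v w
    simp only [lor, inner_sub_left, inner_sub_right, inner_smul_left, inner_smul_right,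
      RCLike.conj_to_real, real_inner_self_eq_norm_sq, real_inner_comm w.2.1 a, ha]
    ring
  · intro p
    refine ⟨1, one_pos, fun v => ?_⟩
    rw [one_mul]
    induction p using OnePoint.rec with
    | infty => rfl
    | coe x =>
      change _ = evHat v ↑(x - (2 * (⟪x, a⟫_ℝ - t)) • a)
      rw [evHat_coe, evHat_coe, norm_sub_sq_real, norm_smul, mul_pow, Real.norm_eq_abs, sq_abs, ha]
      simp only [inner_sub_left, inner_sub_right, inner_smul_left, inner_smul_right,
        RCLike.conj_to_real, real_inner_comm x a]
      ring

lemma exists_lift {n : ℕ} {g : EuclHat n → EuclHat n} (hg : IsMobiusHat n g) :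
    ∃ T, IsLift g T := by
  obtain ⟨L, -, hL, rfl⟩ := hg
  induction L with
  | nil => exact ⟨id, fun _ _ => rfl, fun p => ⟨1, one_pos, fun v => (one_mul _).symm⟩⟩
  | cons f L ih =>
    obtain ⟨T, hT⟩ := ih fun f hf => hL f (List.mem_cons_of_mem _ hf)
    rcases hL f List.mem_cons_self with ⟨a, r, hr, rfl⟩ | ⟨a, t, ha, rfl⟩
    · obtain ⟨U, hU⟩ := exists_lift_sphereRefl a hr
      exact ⟨T ∘ U, hU.comp hT⟩
    · obtain ⟨U, hU⟩ := exists_lift_hyperRefl ha t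
      exact ⟨T ∘ U, hU.comp hT⟩

/-! ### The conformal factor and the derivative of a Möbius map -/

/-- The conformal factor attached to a lift: the pull-back of the constant function `1`. -/
noncomputable def liftFactor {n : ℕ} (T : ℝ × Eucl n × ℝ → ℝ × Eucl n × ℝ) (x : Eucl n) : ℝ :=
  evHat (T (0, 0, 1)) ↑x

section Lift

variable {n : ℕ} {g : EuclHat n → EuclHat n} {T : ℝ × Eucl n × ℝ → ℝ × Eucl n × ℝ}
  {φ : Eucl n → Eucl n}

lemma IsLift.factor (hT : IsLift g T) {x : Eucl n} (hgx : g ↑x = ↑(φ x)) :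
    0 < liftFactor T x ∧ ∀ v, evHat (T v) ↑x = liftFactor T x * evHat v ↑(φ x) := by
  obtain ⟨κ, hκ, h⟩ := hT.2 x
  have hq : liftFactor T x = κ := by
    rw [liftFactor, h, hgx, evHat_coe]; simp
  exact ⟨hq ▸ hκ, fun v => by rw [h, hgx, hq]⟩

/-- An isotropic quadratic function vanishing at `y` is a multiple of `x ↦ |x - y|²`. -/
lemma isotropic_eq {v : ℝ × Eucl n × ℝ} (hv : lor v v = 0) {y : Eucl n}
    (hy : evHat v ↑y = 0) : v.2.1 = (-2 * v.1) • y ∧ v.2.2 = v.1 * ‖y‖ ^ 2 := by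
  rw [evHat_coe] at hy
  rw [lor, real_inner_self_eq_norm_sq] at hv
  have h : ‖v.2.1 + (2 * v.1) • y‖ ^ 2 = 0 := by
    rw [norm_add_sq_real, norm_smul, mul_pow, inner_smul_right, Real.norm_eq_abs, sq_abs]
    linear_combination hv + 4 * v.1 * hy
  have h1 : v.2.1 = (-2 * v.1) • y := by
    have := norm_eq_zero.1 (pow_eq_zero_iff two_ne_zero |>.1 h)
    rw [eq_neg_of_add_eq_zero_left this]
    module
  refine ⟨h1, ?_⟩
  rw [h1, inner_smul_left, real_inner_self_eq_norm_sq] at hy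
  simp only [RCLike.conj_to_real] at hy
  linarith

/-- The chordal distance formula `|φ x - φ y|² = |x - y|² / (q x q y)`. -/
lemma IsLift.norm_sub_sq (hT : IsLift g T) {x y : Eucl n} (hx : g ↑x = ↑(φ x))
    (hy : g ↑y = ↑(φ y)) :
    ‖φ x - φ y‖ ^ 2 * (liftFactor T x * liftFactor T y) = ‖x - y‖ ^ 2 := by
  have hev : ∀ z : Eucl n, evHat ((1, (-2 : ℝ) • φ y, ‖φ y‖ ^ 2) : ℝ × Eucl n × ℝ) ↑z = ‖z - φ y‖ ^ 2 := by
    intro z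
    rw [evHat_coe, norm_sub_sq_real, inner_smul_left, real_inner_comm]
    simp only [RCLike.conj_to_real]
    ring
  obtain ⟨w, hw⟩ : ∃ w, w = T (1, (-2 : ℝ) • φ y, ‖φ y‖ ^ 2) := ⟨_, rfl⟩
  have hiso : lor w w = 0 := by
    rw [hw, hT.1, lor, real_inner_self_eq_norm_sq, norm_smul]
    norm_num
    ring
  have hwy : evHat w ↑y = 0 := by
    rw [hw, (hT.factor hy).2, hev]; simp
  obtain ⟨h1, h2⟩ := isotropic_eq hiso hwy
  -- Pairing with the pull-back of `1` identifies the leading coefficient.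
  have hlead : w.1 * liftFactor T y = 1 := by
    have : lor w (T (0, 0, 1)) = -2 := by rw [hw, hT.1, lor]; simp
    rw [lor, h1, h2, inner_smul_left, real_inner_comm] at this
    rw [liftFactor, evHat_coe]
    simp only [RCLike.conj_to_real] at this
    linarith
  have hwx : w.1 * ‖x - y‖ ^ 2 = liftFactor T x * ‖φ x - φ y‖ ^ 2 := by
    rw [← hev, ← (hT.factor hx).2, ← hw, evHat_coe, h1, h2, norm_sub_sq_real, inner_smul_left,
      real_inner_comm y x]
    simp only [RCLike.conj_to_real]
    ring
  linear_combination (‖x - y‖ ^ 2) * hlead - liftFactor T y * hwx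

lemma continuous_liftFactor : Continuous (liftFactor T) := by
  unfold liftFactor
  simp only [evHat_coe]
  fun_prop

lemma IsLift.differentiableAt (hT : IsLift g T) (hg : ∀ x ∈ uBall n, g ↑x = ↑(φ x))
    {x : Eucl n} (hx : x ∈ uBall n) : DifferentiableAt ℝ φ x := by
  have hd : ∀ v : ℝ × Eucl n × ℝ, DifferentiableAt ℝ (fun z : Eucl n => evHat v ↑z) x := by
    intro v
    simp only [evHat_coe]
    exact (((differentiableAt_id.norm_sq ℝ).const_mul _).add
      ((differentiableAt_const _).inner ℝ differentiableAt_id)).add_const _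
  rw [differentiableAt_euclidean]
  intro i
  have hq := (hT.factor (hg x hx)).1
  refine ((hd (T (0, basisV n i, 0))).mul ((hd (T (0, 0, 1))).fun_inv hq.ne')).congr_of_eventuallyEq ?_
  filter_upwards [isOpen_ball.mem_nhds hx] with z hz
  have hz' := hT.factor (hg z hz)
  have : evHat ((0, basisV n i, 0) : ℝ × Eucl n × ℝ) ↑(φ z) = φ z i := by
    rw [evHat_coe]
    simp [basisV, EuclideanSpace.inner_single_left]
  rw [Pi.mul_apply, hz'.2, this, mul_comm]
  exact (inv_mul_cancel_left₀ hz'.1.ne' _).symm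

/-- The derivative of `φ` is `(q x)⁻¹` times an isometry. -/
lemma IsLift.norm_fderiv (hT : IsLift g T) (hg : ∀ x ∈ uBall n, g ↑x = ↑(φ x))
    {x : Eucl n} (hx : x ∈ uBall n) (h : Eucl n) :
    ‖fderiv ℝ φ x h‖ = (liftFactor T x)⁻¹ * ‖h‖ := by
  have hq := (hT.factor (hg x hx)).1
  have hl : Tendsto (fun t : ℝ => t⁻¹ • (φ (x + t • h) - φ x)) (𝓝[≠] 0) (𝓝 (fderiv ℝ φ x h)) := by
    simpa using ((hT.differentiableAt hg hx).hasFDerivAt.hasLineDerivAt h).tendsto_slope_zero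
  have hl1 := (hl.norm).pow 2
  have hc : Tendsto (fun t : ℝ => x + t • h) (𝓝[≠] 0) (𝓝 x) := by
    have : Continuous fun t : ℝ => x + t • h := by fun_prop
    simpa using (this.tendsto 0).mono_left nhdsWithin_le_nhds
  have hl2 : Tendsto (fun t : ℝ => ‖h‖ ^ 2 / (liftFactor T (x + t • h) * liftFactor T x)) (𝓝[≠] 0)
      (𝓝 (‖h‖ ^ 2 / (liftFactor T x * liftFactor T x))) :=
    tendsto_const_nhds.div (((continuous_liftFactor.tendsto x).comp hc).mul tendsto_const_nhds)
      (mul_pos hq hq).ne'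
  have heq : (fun t : ℝ => ‖t⁻¹ • (φ (x + t • h) - φ x)‖ ^ 2) =ᶠ[𝓝[≠] 0]
      fun t => ‖h‖ ^ 2 / (liftFactor T (x + t • h) * liftFactor T x) := by
    filter_upwards [hc (isOpen_ball.mem_nhds hx), self_mem_nhdsWithin] with t ht ht0
    have ht0 : t ≠ 0 := ht0
    have hqt := (hT.factor (hg _ ht)).1
    have := hT.norm_sub_sq (hg _ ht) (hg x hx)
    rw [eq_div_iff (mul_pos hqt hq).ne', norm_smul, mul_pow, mul_assoc, this, add_sub_cancel_left,
      norm_smul, mul_pow, norm_inv, ← mul_assoc, ← mul_pow, inv_mul_cancel₀ (norm_ne_zero_iff.2 ht0)]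
    simp
  have huniq := tendsto_nhds_unique (hl1.congr' heq) hl2
  rw [← sq_eq_sq₀ (norm_nonneg _) (by positivity), huniq]
  field_simp

lemma IsLift.normDeriv_eq (hT : IsLift g T) (hg : ∀ x ∈ uBall n, g ↑x = ↑(φ x)) (hn : n ≠ 0)
    {x : Eucl n} (hx : x ∈ uBall n) : normDeriv φ x = (liftFactor T x)⁻¹ := by
  have hq := (hT.factor (hg x hx)).1
  obtain ⟨q, hqd⟩ : ∃ q, q = liftFactor T x := ⟨_, rfl⟩
  rw [← hqd] at hq ⊢
  let U : Eucl n →ₗᵢ[ℝ] Eucl n := ⟨q • (fderiv ℝ φ x : Eucl n →ₗ[ℝ] Eucl n), fun h => by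
    rw [LinearMap.smul_apply, norm_smul, ContinuousLinearMap.coe_coe, hT.norm_fderiv hg hx, ← hqd,
      Real.norm_of_nonneg hq.le, mul_inv_cancel_left₀ hq.ne']⟩
  have hU : ∀ h, U h = q • fderiv ℝ φ x h := fun h => rfl
  have hmul : (q • jacMatrix φ x).transpose * (q • jacMatrix φ x) = 1 := by
    ext j k
    have h1 := U.inner_map_map (basisV n j) (basisV n k)
    rw [hU, hU, PiLp.inner_apply] at h1
    have h2 : ⟪basisV n j, basisV n k⟫_ℝ = (1 : Matrix (Fin n) (Fin n) ℝ) j k := by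
      simp [basisV, EuclideanSpace.inner_single_left, Matrix.one_apply]
    rw [h2] at h1
    rw [← h1, Matrix.mul_apply]
    refine Finset.sum_congr rfl fun i _ => ?_
    simp [jacMatrix, mul_comm]
  have hdet := congrArg Matrix.det hmul
  rw [Matrix.det_mul, Matrix.det_transpose, Matrix.det_smul, Matrix.det_one, Fintype.card_fin,
    ← sq] at hdet
  have habs : q ^ n * |(jacMatrix φ x).det| = 1 := by
    refine (pow_eq_one_iff_of_nonneg (by positivity) two_ne_zero).1 ?_
    rw [mul_pow, sq_abs, ← mul_pow, hdet]
  have : |(jacMatrix φ x).det| = q⁻¹ ^ n := by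
    rw [inv_pow]
    exact eq_inv_of_mul_eq_one_right habs
  rw [normDeriv, this, Real.pow_rpow_inv_natCast (inv_nonneg.2 hq.le) hn]

end Lift

/-! ### The integrand as a harmonic function -/

/-- With `q` the conformal factor, `a = |φ x|` and `s = |φ x - η|`, this rewrites the integrand as
`N D ^ (-n / 2)` with `N = q (1 - a ^ 2)` and `D = q s ^ 2`. -/
lemma integrand_identity {n : ℕ} {q s : ℝ} (a : ℝ) (hq : 0 < q) (hs : 0 < s) :
    (1 - a ^ 2) / s ^ n * q⁻¹ ^ (((n : ℝ) - 2) / 2) =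
      q * (1 - a ^ 2) * (q * s ^ 2) ^ (-(n : ℝ) / 2) := by
  rw [Real.mul_rpow hq.le (by positivity), ← Real.rpow_natCast s 2, ← Real.rpow_mul hs.le,
    Real.inv_rpow hq.le, ← Real.rpow_neg hq.le,
    show -(((n : ℝ) - 2) / 2) = 1 + -(n : ℝ) / 2 by ring, Real.rpow_add hq, Real.rpow_one,
    show ((2 : ℕ) : ℝ) * (-(n : ℝ) / 2) = -(n : ℝ) by push_cast; ring, Real.rpow_neg hs.le,
    Real.rpow_natCast, div_eq_mul_inv]
  ring

/-- The mean value property for `N D ^ (-n / 2)`, for quadratic functions `D` isotropic and positive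
on the ball, and `N` orthogonal to `D`. -/
lemma IsRotInv.mean_value_quadratic {n : ℕ} (hn : 3 ≤ n) {σ : Measure (Eucl n)}
    (hσ : IsRotInv σ) {v w : ℝ × Eucl n × ℝ} (hv : lor v v = 0) (hw : lor w v = 0)
    (hpos : ∀ x ∈ uBall n, 0 < evHat v ↑x) {r : ℝ} (hr : r ∈ Ico (0 : ℝ) 1) :
    ∫ ζ, evHat w ↑(r • ζ) * evHat v ↑(r • ζ) ^ (-(n : ℝ) / 2) ∂σ =
      evHat w ↑(0 : Eucl n) * evHat v ↑(0 : Eucl n) ^ (-(n : ℝ) / 2) := by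
  obtain ⟨α, β, γ⟩ := v
  obtain ⟨α', β', γ'⟩ := w
  simp only [lor, evHat_coe] at *
  have hγ : 0 < γ := by simpa using hpos 0 (by simp [uBall])
  obtain ⟨p, hpd⟩ : ∃ p : Eucl n, p = (-(1 / (2 * γ))) • β := ⟨_, rfl⟩
  have hβ : β = (-(2 * γ)) • p := by
    rw [hpd, smul_smul]
    field_simp
    simp
  subst hβ
  have hα : α = ‖p‖ ^ 2 * γ := by
    rw [real_inner_self_eq_norm_sq, norm_smul, mul_pow, Real.norm_eq_abs, sq_abs] at hv
    refine mul_left_cancel₀ (mul_pos (four_pos (α := ℝ)) hγ).ne' ?_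
    linear_combination -hv
  subst hα
  have hα' : α' = -(⟪β', p⟫_ℝ + ‖p‖ ^ 2 * γ') := by
    rw [inner_smul_right] at hw
    refine mul_left_cancel₀ (mul_pos (two_pos (α := ℝ)) hγ).ne' ?_
    linear_combination -hw
  subst hα'
  have hp : ‖p‖ ≤ 1 := by
    by_contra! h
    -- Otherwise `D` vanishes at the inverse point of `p`, which lies in the ball.
    have h0 : 0 < ‖p‖ := one_pos.trans h
    have hmem : (‖p‖ ^ 2)⁻¹ • p ∈ uBall n := by
      rw [uBall, mem_ball_zero_iff, norm_smul, norm_inv, norm_pow, norm_norm]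
      rw [inv_mul_lt_iff₀ (by positivity)]
      nlinarith
    have := hpos _ hmem
    rw [inner_smul_left, inner_smul_right, real_inner_self_eq_norm_sq, norm_smul, norm_inv,
      norm_pow, norm_norm] at this
    simp only [RCLike.conj_to_real] at this
    field_simp at this
    norm_num at this
  have key : ∀ᵐ ζ ∂σ,
      (-(⟪β', p⟫_ℝ + ‖p‖ ^ 2 * γ') * ‖r • ζ‖ ^ 2 + ⟪β', r • ζ⟫_ℝ + γ') *
        (‖p‖ ^ 2 * γ * ‖r • ζ‖ ^ 2 + ⟪(-(2 * γ)) • p, r • ζ⟫_ℝ + γ) ^ (-(n : ℝ) / 2) =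
      γ ^ (-(n : ℝ) / 2) * ((-(⟪β', p⟫_ℝ + ‖p‖ ^ 2 * γ') * r ^ 2 + r * ⟪β', ζ⟫_ℝ + γ') *
        (1 - 2 * r * ⟪p, ζ⟫_ℝ + ‖p‖ ^ 2 * r ^ 2) ^ (-(n : ℝ) / 2)) := by
    filter_upwards [hσ.supp] with ζ hζ
    have hmem : r • ζ ∈ uBall n := by
      rw [uBall, mem_ball_zero_iff, norm_smul, hζ, mul_one, Real.norm_of_nonneg hr.1]
      exact hr.2
    have hD := hpos _ hmem
    have e1 : ‖r • ζ‖ ^ 2 = r ^ 2 := by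
      rw [norm_smul, hζ, mul_one, Real.norm_eq_abs, sq_abs]
    have e2 : ‖p‖ ^ 2 * γ * ‖r • ζ‖ ^ 2 + ⟪(-(2 * γ)) • p, r • ζ⟫_ℝ + γ =
        γ * (1 - 2 * r * ⟪p, ζ⟫_ℝ + ‖p‖ ^ 2 * r ^ 2) := by
      rw [e1, inner_smul_left, inner_smul_right]
      simp only [RCLike.conj_to_real]
      ring
    rw [e2] at hD ⊢
    rw [Real.mul_rpow hγ.le (pos_of_mul_pos_right hD hγ.le).le, e1, inner_smul_right]
    ring
  rw [integral_congr_ae key, integral_const_mul, hσ.mean_value hn hp β' γ' hr]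
  simp [mul_comm]

/-- The size of the Poisson kernel: `|x - η| ≥ 1 - |x|`. -/
lemma poissonK_le {n : ℕ} {x η : Eucl n} (hx : x ∈ uBall n) (hη : η ∈ uSphere n) :
    poissonK n x η ≤ (1 + ‖x‖) * (1 - ‖x‖) ^ (1 - (n : ℝ)) := by
  have hx : ‖x‖ < 1 := by simpa [uBall] using hx
  have hη : ‖η‖ = 1 := by simpa [uSphere] using hη
  have h1 : 0 < 1 - ‖x‖ := by linarith
  have h2 : 1 - ‖x‖ ≤ ‖x - η‖ := by
    rw [← hη, norm_sub_rev]; exact norm_sub_norm_le _ _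
  rw [poissonK, Real.rpow_sub h1, Real.rpow_one, Real.rpow_natCast, ← mul_div_assoc,
    show (1 + ‖x‖) * (1 - ‖x‖) = 1 - ‖x‖ ^ 2 by ring]
  have h3 : 0 ≤ 1 - ‖x‖ ^ 2 := by nlinarith [norm_nonneg x]
  gcongr

/-- inequality (3.6): For `n ≥ 3` and `φ` the restriction to `B` of a
Möbius transformation of `ℝ̂ⁿ` with `φ(B) ⊆ B`, for every `r ∈ [0,1)` and `η ∈ S`,
`∫_S P(φ(rζ),η)|Dφ(rζ)|^{(n−2)/2} dσ(ζ) ≤ (1+|φ(0)|)(1−|φ(0)|)^{1−n}|Dφ(0)|^{(n−2)/2}`. -/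
theorem poisson_integral_estimate (n : ℕ) (hn : 3 ≤ n)
    (φ : Eucl n → Eucl n) (hφ : IsMobiusRestr n φ (uBall n))
    (hmaps : Set.MapsTo φ (uBall n) (uBall n)) :
    ∀ r ∈ Set.Ico (0 : ℝ) 1, ∀ η ∈ uSphere n,
      ∫ ζ, poissonK n (φ (r • ζ)) η * normDeriv φ (r • ζ) ^ (((n : ℝ) - 2) / 2)
          ∂(sphMeasure n) ≤
        (1 + ‖φ 0‖) * (1 - ‖φ 0‖) ^ (1 - (n : ℝ)) *
          normDeriv φ 0 ^ (((n : ℝ) - 2) / 2) := by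
  intro r hr η hη
  have h0 : (0 : Eucl n) ∈ uBall n := by simp [uBall]
  have hbound : poissonK n (φ 0) η * normDeriv φ 0 ^ (((n : ℝ) - 2) / 2) ≤
      (1 + ‖φ 0‖) * (1 - ‖φ 0‖) ^ (1 - (n : ℝ)) * normDeriv φ 0 ^ (((n : ℝ) - 2) / 2) :=
    mul_le_mul_of_nonneg_right (poissonK_le (hmaps h0) hη)
      (Real.rpow_nonneg (Real.rpow_nonneg (abs_nonneg _) _) _)
  rcases sphMeasure_eq_zero_or n with hzero | hσ
  · rw [hzero, integral_zero_measure]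
    refine le_trans (mul_nonneg (div_nonneg ?_ (by positivity))
      (Real.rpow_nonneg (Real.rpow_nonneg (abs_nonneg _) _) _)) hbound
    have : ‖φ 0‖ < 1 := by simpa [uBall] using hmaps h0
    nlinarith [norm_nonneg (φ 0)]
  refine le_trans (le_of_eq ?_) hbound
  obtain ⟨g, hg, hgφ⟩ := hφ
  obtain ⟨T, hT⟩ := exists_lift hg
  have hη1 : ‖η‖ = 1 := by simpa [uSphere] using hη
  have hs : ∀ x ∈ uBall n, 0 < ‖φ x - η‖ := fun x hx => by
    have h : ‖φ x‖ < 1 := by simpa [uBall] using hmaps hx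
    refine norm_pos_iff.2 (sub_ne_zero.2 fun he => ?_)
    rw [he, hη1] at h
    exact lt_irrefl _ h
  have hN : ∀ x ∈ uBall n, evHat (T (-1, 0, 1)) ↑x = liftFactor T x * (1 - ‖φ x‖ ^ 2) :=
    fun x hx => by
      rw [(hT.factor (hgφ x hx)).2, evHat_coe]
      simp only [inner_zero_left]
      ring
  have hD : ∀ x ∈ uBall n,
      evHat (T (1, (-2 : ℝ) • η, 1)) ↑x = liftFactor T x * ‖φ x - η‖ ^ 2 :=
    fun x hx => by
      rw [(hT.factor (hgφ x hx)).2, evHat_coe, norm_sub_sq_real, hη1, inner_smul_left,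
        real_inner_comm]
      simp only [RCLike.conj_to_real]
      ring
  have heq : ∀ x ∈ uBall n, poissonK n (φ x) η * normDeriv φ x ^ (((n : ℝ) - 2) / 2) =
      evHat (T (-1, 0, 1)) ↑x * evHat (T (1, (-2 : ℝ) • η, 1)) ↑x ^ (-(n : ℝ) / 2) :=
    fun x hx => by
      rw [hT.normDeriv_eq hgφ (by omega) hx, poissonK, hN x hx, hD x hx]
      exact integrand_identity _ (hT.factor (hgφ x hx)).1 (hs x hx)
  have hv : lor (T (1, (-2 : ℝ) • η, 1)) (T (1, (-2 : ℝ) • η, 1)) = 0 := by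
    rw [hT.1, lor, real_inner_self_eq_norm_sq, norm_smul, hη1]
    norm_num
  have hw : lor (T (-1, 0, 1)) (T (1, (-2 : ℝ) • η, 1)) = 0 := by
    rw [hT.1, lor]
    simp
  have hpos : ∀ x ∈ uBall n, 0 < evHat (T (1, (-2 : ℝ) • η, 1)) ↑x := fun x hx => by
    rw [hD x hx]
    exact mul_pos (hT.factor (hgφ x hx)).1 (pow_pos (hs x hx) 2)
  rw [heq 0 h0, ← hσ.mean_value_quadratic hn hv hw hpos hr]
  refine integral_congr_ae ?_
  filter_upwards [hσ.supp] with ζ hζ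
  refine heq _ ?_
  rw [uBall, mem_ball_zero_iff, norm_smul, hζ, mul_one, Real.norm_of_nonneg hr.1]
  exact hr.2
end
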